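/- arXiv:2203.05162 — 2 statements merged into one kernel-verified Lean document; each statement's English description precedes it below -/
import Mathlib

section
/- Let K be a field, D a K-linear idempotent complete triangulated category with a split-generator, 𝔞 a bounded t-structure on D with finite heart, and Φ : D → D an exact endofunctor with Φ^N ≇ 0 for all N > 0. Then for every t ∈ ℝ and every split-generator G of D, the limit lim_{N→∞} (1/N) log δ̂_t^𝔞(Φ^N(G)) exists and h_t(Φ) = ĥ_t^𝔞(Φ) = lim_{N→∞} (1/N) log δ̂_t^𝔞(Φ^N(G)); in particular ĥ_t^𝔞(Φ) does not depend on the choice of 𝔞. -/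
/-!
Write `δ(E)` for the complexity `δ_t(G, E)` and `T(E)` for `δ̂_t(E)`. Everything follows from two
comparisons, valid for all objects `E` and all `N`:

* `δ(E) ≤ C T(E)` for a constant `C` (`complexity_le_tComplexity`): refine the t-filtration of `E`
  to one with simple factors, of which there are finitely many up to isomorphism and shift, and use
  that `δ` is subadditive over distinguished triangles.
* `T(Φ^N E) ≤ δ(E) T(Φ^N G)` (`tComplexity_iter_le`): apply the exact functor `Φ^N` to a filtration
  of `E ⊞ F'` by shifts of `G`, and use that `T` is subadditive over distinguished triangles and
  does not increase on passing to direct summands.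

Put `a N = T(Φ^N G)`. The two comparisons give `a (M + N) ≤ C (a M) (a N)`. Each `a N` is finite, and
nonzero because a power of `Φ` killing the split-generator `G` would kill everything. Hence Fekete's
lemma, in a form that allows the limit `-∞`, shows that `(1/N) log (a N)` converges to some `L`
(`exists_tendsto_entSeq`). For `N = 0` the second comparison reads `T(E) ≤ δ(E) T(G)`, so
`T(G)⁻¹ (a N) ≤ δ(Φ^N G) ≤ C (a N)` and the entropy is `L`. Finally `T(Φ^N E) ≤ δ(E) (a N)` bounds the
growth rate for every `E` by `L`, with equality for `E = G`.

Subadditivity of `T` is the main point (`tComplexity_tri`). The heart is abelian and `H⁰` is a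
homological functor (`H0_exact`). The length of the middle term of an exact sequence is at most the
sum of the lengths of its outer terms (`L.ext`), and `T(E)` is the infimum of `∑ f n e^{-nt}` over all
bounds `f n` for the lengths of the objects `Hⁿ E` (`tComplexity_eq`). Working with upper bounds for
lengths makes the Jordan–Hölder theorem and the uniqueness of t-filtrations unnecessary.

`Pretriangulated` does not include the octahedral axiom. Subadditivity of `δ` therefore rests on
`weak_octahedral`, which holds up to direct summands, and the exactness of `H⁰` on truncations of
iterated cocones.
-/

/- Common definitions: filtrations, categorical complexity and entropy,
(co-)t-structures, hearts/co-hearts, and associated entropy-type invariants. -/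

open CategoryTheory CategoryTheory.Limits CategoryTheory.Pretriangulated Filter
open scoped ENNReal

universe w v u

namespace CatEnt

/-- Iterates of an endofunctor. -/
def iter {C : Type u} [Category.{v} C] (Φ : C ⥤ C) : ℕ → C ⥤ C
  | 0 => 𝟭 C
  | (n + 1) => iter Φ n ⋙ Φ

variable (C : Type u) [Category.{v} C] [Preadditive C] [HasZeroObject C]
  [HasShift C ℤ] [∀ n : ℤ, (shiftFunctor C n).Additive] [Pretriangulated C]
  [HasFiniteBiproducts C]

/-- A filtration `0 = A 0 → A 1 → ⋯ → A m ≅ F` whose successive cones (factors)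
are the objects `X i`, and all of whose objects lie in the class `S`. -/
def HasFiltrationIn (S : Set C) (F : C) {m : ℕ} (X : Fin m → C) : Prop :=
  ∃ A : Fin (m + 1) → C, IsZero (A 0) ∧ Nonempty (A (Fin.last m) ≅ F) ∧
    (∀ i, A i ∈ S) ∧
    ∀ i : Fin m, ∃ (f : A i.castSucc ⟶ A i.succ) (g : A i.succ ⟶ X i)
      (h : X i ⟶ (A i.castSucc)⟦(1 : ℤ)⟧), Triangle.mk f g h ∈ distTriang C

/-- The categorical complexity `δ_t(E, F)` computed inside the class `S`:
the infimum of `∑ exp (k i * t)` over all filtrations of objects `F ⊞ F'`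
(`F' ∈ S`) with factors the shifts `E⟦k i⟧`. -/
noncomputable def complexityIn (S : Set C) (t : ℝ) (E F : C) : ℝ≥0∞ :=
  sInf { c | ∃ (m : ℕ) (k : Fin m → ℤ) (F' : C), F' ∈ S ∧
    HasFiltrationIn C S (F ⊞ F') (fun i => E⟦k i⟧) ∧
    c = ENNReal.ofReal (∑ i, Real.exp ((k i : ℝ) * t)) }

/-- The categorical complexity `δ_t(E,F)` of Dimitrov–Haiden–Katzarkov–Kontsevich. -/
noncomputable def complexity (t : ℝ) (E F : C) : ℝ≥0∞ :=
  complexityIn C Set.univ t E F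

/-- `G` is a split-generator of the (triangulated sub)category determined by `S`. -/
def IsSplitGeneratorIn (S : Set C) (G : C) : Prop :=
  G ∈ S ∧ ∀ X ∈ S, ∃ (m : ℕ) (k : Fin m → ℤ) (F' : C), F' ∈ S ∧
    HasFiltrationIn C S (X ⊞ F') (fun i => G⟦k i⟧)

/-- `G` is a split-generator of `C`. -/
def IsSplitGenerator (G : C) : Prop := IsSplitGeneratorIn C Set.univ G

/-- The sequence `N ↦ (1/N) log (f N)`, with values in the extended reals. -/
noncomputable def entSeq (f : ℕ → ℝ≥0∞) (N : ℕ) : EReal :=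
  (((N : ℝ)⁻¹ : ℝ) : EReal) * ENNReal.log (f N)

/-- The categorical entropy of `Φ` restricted to `S`, computed with the
split-generator `G`: `limsup_N (1/N) log δ_t(G, Φ^N G)`. -/
noncomputable def entropyIn (S : Set C) (Φ : C ⥤ C) (G : C) (t : ℝ) : EReal :=
  Filter.limsup
    (entSeq (fun N => complexityIn C S t G ((iter Φ N).obj G))) Filter.atTop

/-- The categorical entropy `h_t(Φ)`, computed with the split-generator `G`. -/
noncomputable def entropy (Φ : C ⥤ C) (G : C) (t : ℝ) : EReal :=
  entropyIn C Set.univ Φ G t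

/-- `Φ^N` is not isomorphic to `0` on `S`, for all `N > 0`. -/
def PowersNonzeroOn (S : Set C) (Φ : C ⥤ C) : Prop :=
  ∀ N : ℕ, 0 < N → ∃ X ∈ S, ¬ IsZero ((iter Φ N).obj X)

/-- `Φ` maps the class `S` into itself. -/
def Preserves (S : Set C) (Φ : C ⥤ C) : Prop := ∀ X ∈ S, Φ.obj X ∈ S

section TStructure

/-- `(le, ge)` is a t-structure on the full triangulated subcategory of `C`
determined by `S` (take `S = Set.univ` for a t-structure on `C`). -/
structure IsTStructureIn (S le ge : Set C) : Prop where
  le_sub : le ⊆ S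
  ge_sub : ge ⊆ S
  le_iso : ∀ ⦃X Y : C⦄, (X ≅ Y) → X ∈ le → Y ∈ le
  ge_iso : ∀ ⦃X Y : C⦄, (X ≅ Y) → X ∈ ge → Y ∈ ge
  shift_le : ∀ X ∈ le, X⟦(1 : ℤ)⟧ ∈ le
  shift_ge : ∀ X ∈ ge, X⟦(-1 : ℤ)⟧ ∈ ge
  hom_zero : ∀ X ∈ le, ∀ Y : C, Y⟦(1 : ℤ)⟧ ∈ ge → ∀ f : X ⟶ Y, f = 0
  exists_triangle : ∀ E ∈ S, ∃ (D' F' : C), D' ∈ le ∧ F'⟦(1 : ℤ)⟧ ∈ ge ∧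
    ∃ (f : D' ⟶ E) (g : E ⟶ F') (h : F' ⟶ D'⟦(1 : ℤ)⟧),
      Triangle.mk f g h ∈ distTriang C

/-- Boundedness of a (co-)t-structure `(P, Q)` on the subcategory determined
by `S` : every object of `S` lies in some shift of `P` and in some shift of `Q`. -/
def IsBoundedIn (S P Q : Set C) : Prop :=
  ∀ E ∈ S, (∃ k : ℤ, E⟦k⟧ ∈ P) ∧ (∃ k : ℤ, E⟦k⟧ ∈ Q)

/-- The heart of a t-structure. -/
def heart (le ge : Set C) : Set C := le ∩ ge

/-- `X` is a simple object of the heart `H` : it is a nonzero object of `H`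
and in every extension `A → X → B` with `A, B ∈ H`, `A` or `B` vanishes. -/
def SimpleIn (H : Set C) (X : C) : Prop :=
  X ∈ H ∧ ¬ IsZero X ∧ ∀ A B : C, A ∈ H → B ∈ H →
    (∃ (f : A ⟶ X) (g : X ⟶ B) (h : B ⟶ A⟦(1 : ℤ)⟧),
      Triangle.mk f g h ∈ distTriang C) →
    IsZero A ∨ IsZero B

/-- `X` (an object of the heart `H`) has length `n`, i.e. admits a composition
series with `n` simple factors. -/
def HasLengthIn (H : Set C) (X : C) (n : ℕ) : Prop :=
  ∃ S : Fin n → C, (∀ i, SimpleIn C H (S i)) ∧ HasFiltrationIn C Set.univ X S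

/-- The heart `H` is finite : it is a length category having only finitely
many isomorphism classes of simple objects. -/
def FiniteHeart (H : Set C) : Prop :=
  (∀ X ∈ H, ∃ n : ℕ, HasLengthIn C H X n) ∧
  ∃ (n : ℕ) (S : Fin n → C), (∀ i, SimpleIn C H (S i)) ∧
    (∀ i j, i ≠ j → IsEmpty (S i ≅ S j)) ∧
    ∀ T, SimpleIn C H T → ∃ i, Nonempty (T ≅ S i)

/-- The invariant `δ̂_t` associated with a bounded t-structure with finite
heart `H` : the value `∑ λ(E i) * exp (k i * t)` on the (essentially unique)
t-filtration of `E`, with factors `(X i)⟦k i⟧`, `X i ∈ H`, `k` strictly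
decreasing (encoded as an infimum over all such filtrations). -/
noncomputable def tComplexity (H : Set C) (t : ℝ) (E : C) : ℝ≥0∞ :=
  sInf { c | ∃ (m : ℕ) (k : Fin m → ℤ) (X : Fin m → C) (lam : Fin m → ℕ),
    StrictAnti k ∧ (∀ i, X i ∈ H) ∧ (∀ i, HasLengthIn C H (X i) (lam i)) ∧
    HasFiltrationIn C Set.univ E (fun i => (X i)⟦k i⟧) ∧
    c = ENNReal.ofReal (∑ i, (lam i : ℝ) * Real.exp ((k i : ℝ) * t)) }

/-- The entropy-type invariant `ĥ_t` associated with a bounded t-structure with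
finite heart `H`, for the subcategory determined by `S` :
`sup_{E ∈ S} limsup_N (1/N) log δ̂_t(Φ^N E)`. -/
noncomputable def tEntropyIn (S H : Set C) (Φ : C ⥤ C) (t : ℝ) : EReal :=
  ⨆ E : {X : C // X ∈ S},
    Filter.limsup
      (entSeq (fun N => tComplexity C H t ((iter Φ N).obj E.1))) Filter.atTop

end TStructure

section CoTStructure

/-- `(ge, le)` is a co-t-structure on the full triangulated subcategory of `C`
determined by `S` (take `S = Set.univ` for a co-t-structure on `C`). -/
structure IsCoTStructureIn (S ge le : Set C) : Prop where
  ge_sub : ge ⊆ S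
  le_sub : le ⊆ S
  ge_iso : ∀ ⦃X Y : C⦄, (X ≅ Y) → X ∈ ge → Y ∈ ge
  le_iso : ∀ ⦃X Y : C⦄, (X ≅ Y) → X ∈ le → Y ∈ le
  ge_summand : ∀ X Y : C, (X ⊞ Y) ∈ ge → X ∈ ge
  le_summand : ∀ X Y : C, (X ⊞ Y) ∈ le → X ∈ le
  shift_ge : ∀ X ∈ ge, X⟦(-1 : ℤ)⟧ ∈ ge
  shift_le : ∀ X ∈ le, X⟦(1 : ℤ)⟧ ∈ le
  hom_zero : ∀ X : C, X⟦(1 : ℤ)⟧ ∈ ge → ∀ Y ∈ le, ∀ f : X ⟶ Y, f = 0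
  exists_triangle : ∀ E ∈ S, ∃ (D' F' : C), D'⟦(1 : ℤ)⟧ ∈ ge ∧ F' ∈ le ∧
    ∃ (f : D' ⟶ E) (g : E ⟶ F') (h : F' ⟶ D'⟦(1 : ℤ)⟧),
      Triangle.mk f g h ∈ distTriang C

/-- The co-heart of a co-t-structure. -/
def coheart (ge le : Set C) : Set C := ge ∩ le

/-- `X` is an indecomposable object of the co-heart `H`. -/
def IndecIn (H : Set C) (X : C) : Prop :=
  X ∈ H ∧ ¬ IsZero X ∧ ∀ A B : C, Nonempty (X ≅ A ⊞ B) → IsZero A ∨ IsZero B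

/-- `X` (an object of the co-heart `H`) is a direct sum of `n` indecomposable
objects, i.e. `σ(X) = n`. -/
def HasSummandCountIn (H : Set C) (X : C) (n : ℕ) : Prop :=
  ∃ M : Fin n → C, (∀ i, IndecIn C H (M i)) ∧ Nonempty (X ≅ ⨁ M)

/-- The co-heart `H` is finite : it is a Krull–Schmidt category (decompositions
into indecomposables exist and are essentially unique) having only finitely many
isomorphism classes of indecomposable objects. -/
def FiniteCoheart (H : Set C) : Prop :=
  (∀ X ∈ H, ∃ n : ℕ, HasSummandCountIn C H X n) ∧
  (∀ X ∈ H, ∀ (n m : ℕ) (M : Fin n → C) (N : Fin m → C),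
    (∀ i, IndecIn C H (M i)) → (∀ j, IndecIn C H (N j)) →
    Nonempty (X ≅ ⨁ M) → Nonempty (X ≅ ⨁ N) →
    ∃ e : Fin n ≃ Fin m, ∀ i, Nonempty (M i ≅ N (e i))) ∧
  ∃ (n : ℕ) (M : Fin n → C), (∀ i, IndecIn C H (M i)) ∧
    (∀ i j, i ≠ j → IsEmpty (M i ≅ M j)) ∧
    ∀ T, IndecIn C H T → ∃ i, Nonempty (T ≅ M i)

/-- The invariant `δ̌_t` associated with a bounded co-t-structure with finite
co-heart `H` : the infimum, over all co-t-filtrations of `E` (filtrations with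
factors `(X i)⟦k i⟧`, `X i ∈ H`, `k` strictly increasing), of
`∑ σ(X i) * exp (k i * t)`. -/
noncomputable def coComplexity (H : Set C) (t : ℝ) (E : C) : ℝ≥0∞ :=
  sInf { c | ∃ (m : ℕ) (k : Fin m → ℤ) (X : Fin m → C) (s : Fin m → ℕ),
    StrictMono k ∧ (∀ i, X i ∈ H) ∧ (∀ i, HasSummandCountIn C H (X i) (s i)) ∧
    HasFiltrationIn C Set.univ E (fun i => (X i)⟦k i⟧) ∧
    c = ENNReal.ofReal (∑ i, (s i : ℝ) * Real.exp ((k i : ℝ) * t)) }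

/-- The entropy-type invariant `ȟ_t` associated with a bounded co-t-structure
with finite co-heart `H`, for the subcategory determined by `S`. -/
noncomputable def coEntropyIn (S H : Set C) (Φ : C ⥤ C) (t : ℝ) : EReal :=
  ⨆ E : {X : C // X ∈ S},
    Filter.limsup
      (entSeq (fun N => coComplexity C H t ((iter Φ N).obj E.1))) Filter.atTop

end CoTStructure

end CatEnt

open CatEnt

namespace EntropyProof

set_option linter.unusedSectionVars false

/-! ### Distinguished triangles without the octahedral axiom -/

section Triangles

variable {D : Type u} [Category.{v} D] [Preadditive D] [HasZeroObject D]
  [HasShift D ℤ] [∀ n : ℤ, (shiftFunctor D n).Additive] [Pretriangulated D]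

/-- `X`, `Y`, `Z` are the vertices of some distinguished triangle `X ⟶ Y ⟶ Z ⟶ X⟦1⟧`. -/
def Tri (X Y Z : D) : Prop :=
  ∃ (f : X ⟶ Y) (g : Y ⟶ Z) (h : Z ⟶ X⟦(1 : ℤ)⟧), Triangle.mk f g h ∈ distTriang D

lemma Tri.of_iso {X Y Z X' Y' Z' : D} (h : Tri X Y Z) (a : X ≅ X') (b : Y ≅ Y') (c : Z ≅ Z') :
    Tri X' Y' Z' := by
  obtain ⟨f, g, h, H⟩ := h
  refine ⟨a.inv ≫ f ≫ b.hom, b.inv ≫ g ≫ c.hom, c.inv ≫ h ≫ a.hom⟦1⟧', ?_⟩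
  refine isomorphic_distinguished _ H _ ?_
  refine Triangle.isoMk _ _ a.symm b.symm c.symm ?_ ?_ ?_
  · change (a.inv ≫ f ≫ b.hom) ≫ b.inv = a.inv ≫ f
    simp
  · change (b.inv ≫ g ≫ c.hom) ≫ c.inv = b.inv ≫ g
    simp
  · change (c.inv ≫ h ≫ a.hom⟦1⟧') ≫ a.inv⟦1⟧' = c.inv ≫ h
    simp [← Functor.map_comp]

lemma Tri.shift {X Y Z : D} (h : Tri X Y Z) (n : ℤ) : Tri (X⟦n⟧) (Y⟦n⟧) (Z⟦n⟧) := by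
  obtain ⟨f, g, h, H⟩ := h
  exact ⟨_, _, _, Triangle.shift_distinguished _ H n⟩

lemma tri_zero_right (X : D) {Z : D} (hZ : IsZero Z) : Tri X X Z :=
  Tri.of_iso ⟨_, _, _, contractible_distinguished X⟩ (Iso.refl _) (Iso.refl _)
    (hZ.isoZero.symm)

lemma tri_zero_left (X : D) {Z : D} (hZ : IsZero Z) : Tri Z X X := by
  have := contractible_distinguished₁ X
  exact Tri.of_iso ⟨_, _, _, this⟩ (hZ.isoZero.symm) (Iso.refl _) (Iso.refl _)

section

variable {X Y Z X' Y' Z' : D} {f : X ⟶ Y} {g : Y ⟶ Z} {h : Z ⟶ X⟦(1 : ℤ)⟧}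
  {f' : X' ⟶ Y'} {g' : Y' ⟶ Z'} {h' : Z' ⟶ X'⟦(1 : ℤ)⟧}

lemma tri_hom_mid (H : Triangle.mk f g h ∈ distTriang D) (H' : Triangle.mk f' g' h' ∈ distTriang D)
    (a : X ⟶ X') (c : Z ⟶ Z') (w : h ≫ a⟦(1 : ℤ)⟧' = c ≫ h') :
    ∃ b : Y ⟶ Y', f ≫ b = a ≫ f' ∧ g ≫ c = b ≫ g' :=
  complete_distinguished_triangle_morphism₂ _ _ H H' a c w

lemma tri_lift_mid (H : Triangle.mk f g h ∈ distTriang D) {W : D} (φ : W ⟶ Y) (w : φ ≫ g = 0) :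
    ∃ ψ : W ⟶ X, φ = ψ ≫ f :=
  Triangle.coyoneda_exact₂ _ H φ w

lemma tri_lift_right (H : Triangle.mk f g h ∈ distTriang D) {W : D} (φ : W ⟶ Z) (w : φ ≫ h = 0) :
    ∃ ψ : W ⟶ Y, φ = ψ ≫ g :=
  Triangle.coyoneda_exact₃ _ H φ w

lemma tri_desc_mid (H : Triangle.mk f g h ∈ distTriang D) {W : D} (φ : Y ⟶ W) (w : f ≫ φ = 0) :
    ∃ ψ : Z ⟶ W, φ = g ≫ ψ :=
  Triangle.yoneda_exact₂ _ H φ w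

lemma tri_comp₁₂ (H : Triangle.mk f g h ∈ distTriang D) : f ≫ g = 0 :=
  comp_distTriang_mor_zero₁₂ _ H

lemma tri_comp₂₃ (H : Triangle.mk f g h ∈ distTriang D) : g ≫ h = 0 :=
  comp_distTriang_mor_zero₂₃ _ H

lemma tri_comp₃₁ (H : Triangle.mk f g h ∈ distTriang D) : h ≫ f⟦(1 : ℤ)⟧' = 0 :=
  comp_distTriang_mor_zero₃₁ _ H

lemma tri_isIso_mid (H : Triangle.mk f g h ∈ distTriang D) (θ : Y ⟶ Y) (h₁ : f ≫ θ = f)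
    (h₂ : θ ≫ g = g) : IsIso θ := by
  let τ : Triangle.mk f g h ⟶ Triangle.mk f g h := Triangle.homMk _ _ (𝟙 X) θ (𝟙 Z)
    (h₁.trans (Category.id_comp f).symm) ((Category.comp_id g).trans h₂.symm) (by
      have : h ≫ (𝟙 X)⟦(1 : ℤ)⟧' = 𝟙 Z ≫ h := by simp
      exact this)
  exact isIso₂_of_isIso₁₃ τ H H (by change IsIso (𝟙 X); infer_instance)
    (by change IsIso (𝟙 Z); infer_instance)

end

/-- A substitute for the octahedral axiom that holds in every pretriangulated category: an
extension `E` of `B` by `E₁`, with `B` itself an extension of `G` by `b`, is a direct summand of an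
extension `M` of `G` by some extension `V` of `b` by `E₁`. Direct summands are harmless for
complexities, so this version suffices. -/
lemma weak_octahedral {E₁ E B b G : D} (h₁ : Tri E₁ E B) (h₂ : Tri b B G) :
    ∃ V M : D, Tri E₁ V b ∧ Tri V M G ∧ Nonempty (Retract E M) := by
  obtain ⟨a, p, δ, H₁⟩ := h₁
  obtain ⟨j, q, d, H₂⟩ := h₂
  obtain ⟨V, x, y, HV⟩ := distinguished_cocone_triangle₂ (j ≫ δ)
  obtain ⟨e, he₁, he₂⟩ := tri_hom_mid HV H₁ (𝟙 E₁) j (by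
    rw [CategoryTheory.Functor.map_id]; exact Category.comp_id _)
  rw [Category.id_comp] at he₁
  obtain ⟨Y, f, g, HY⟩ := distinguished_cocone_triangle e
  obtain ⟨E', s, w, HE'⟩ := distinguished_cocone_triangle₁ (p ≫ q)
  obtain ⟨u, hu⟩ := tri_lift_mid H₂ (s ≫ p) ((Category.assoc _ _ _).trans (tri_comp₁₂ HE'))
  obtain ⟨v, hv⟩ := tri_lift_right HV u (by
      rw [← Category.assoc, ← hu, Category.assoc, tri_comp₂₃ H₁, comp_zero])
  obtain ⟨z, hz⟩ := tri_lift_mid H₁ (v ≫ e - s) (by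
      rw [Preadditive.sub_comp, Category.assoc, ← he₂, hu, hv, Category.assoc, sub_self])
  have sf : s ≫ f = 0 := by
    have : s = v ≫ e - z ≫ x ≫ e := by rw [he₁, ← hz]; abel
    rw [this]; simp [tri_comp₁₂ HY]
  obtain ⟨h, hh⟩ := tri_desc_mid HE' f sf
  obtain ⟨M, m, n, HM⟩ := distinguished_cocone_triangle₂ (h ≫ g)
  obtain ⟨i, hi⟩ := tri_lift_right HM (p ≫ q) (by
      rw [← Category.assoc, ← hh, tri_comp₂₃ HY])
  obtain ⟨r, hr₁, hr₂⟩ := tri_hom_mid HM HY (𝟙 V) h (by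
    rw [CategoryTheory.Functor.map_id]; exact Category.comp_id _)
  rw [Category.id_comp] at hr₁
  obtain ⟨k, hk⟩ := tri_lift_mid HY (i ≫ r - 𝟙 E) (by
      rw [Preadditive.sub_comp, Category.assoc, ← hr₂, ← Category.assoc, ← hi, ← hh,
        Category.id_comp, sub_self])
  refine ⟨V, M, ⟨_, _, _, HV⟩, ⟨_, _, _, HM⟩, ⟨⟨i - k ≫ m, r, ?_⟩⟩⟩
  rw [Preadditive.sub_comp, Category.assoc, hr₁, ← hk]; abel

/-- If `V` is a direct summand of `A`, an extension of `G` by `V` is a direct summand of an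
extension of `G` by `A`. -/
lemma Tri.retract_left {V M G A : D} (h : Tri V M G) (ρ : Retract V A) :
    ∃ A' : D, Tri A A' G ∧ Nonempty (Retract M A') := by
  obtain ⟨m, n, w, H⟩ := h
  obtain ⟨A', α, β, H'⟩ := distinguished_cocone_triangle₂ (w ≫ ρ.i⟦(1 : ℤ)⟧')
  obtain ⟨φ, h₁, h₂⟩ := tri_hom_mid H H' ρ.i (𝟙 G) (Category.id_comp _).symm
  obtain ⟨ψ, h₃, h₄⟩ := tri_hom_mid H' H ρ.r (𝟙 G) (by
    rw [Category.assoc, ← Functor.map_comp, ρ.retract, CategoryTheory.Functor.map_id, Category.id_comp]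
    exact Category.comp_id w)
  rw [Category.comp_id] at h₂ h₄
  have : IsIso (φ ≫ ψ) := tri_isIso_mid H _
    (by rw [← Category.assoc, h₁, Category.assoc, h₃, ← Category.assoc, ρ.retract,
      Category.id_comp])
    (by rw [Category.assoc, ← h₄, ← h₂])
  exact ⟨A', ⟨_, _, _, H'⟩, ⟨⟨φ, ψ ≫ inv (φ ≫ ψ), by rw [← Category.assoc]; simp⟩⟩⟩

lemma Tri.retract_right {E₁ E E₃ B : D} (h : Tri E₁ E E₃) (ρ : Retract E₃ B) :
    ∃ E' : D, Tri E₁ E' B ∧ Nonempty (Retract E E') := by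
  obtain ⟨m, n, w, H⟩ := h
  obtain ⟨A', α, β, H'⟩ := distinguished_cocone_triangle₂ (ρ.r ≫ w)
  obtain ⟨φ, h₁, h₂⟩ := tri_hom_mid H H' (𝟙 E₁) ρ.i (by
    rw [CategoryTheory.Functor.map_id, ← Category.assoc, ρ.retract, Category.id_comp]
    exact Category.comp_id w)
  obtain ⟨ψ, h₃, h₄⟩ := tri_hom_mid H' H (𝟙 E₁) ρ.r (by
    rw [CategoryTheory.Functor.map_id]; exact Category.comp_id _)
  rw [Category.id_comp] at h₁ h₃
  have : IsIso (φ ≫ ψ) := tri_isIso_mid H _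
    (by rw [← Category.assoc, h₁, h₃])
    (by rw [Category.assoc, ← h₄, ← Category.assoc, ← h₂, Category.assoc, ρ.retract,
      Category.comp_id])
  exact ⟨A', ⟨_, _, _, H'⟩, ⟨⟨φ, ψ ≫ inv (φ ≫ ψ), by rw [← Category.assoc]; simp⟩⟩⟩

lemma Tri.iso_of_isZero_right {X Y Z : D} (h : Tri X Y Z) (hZ : IsZero Z) :
    Nonempty (X ≅ Y) := by
  obtain ⟨f, g, h, H⟩ := h
  have : IsIso f := (Triangle.isZero₃_iff_isIso₁ _ H).1 hZ
  exact ⟨asIso f⟩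

lemma Tri.iso_of_isZero_left {X Y Z : D} (h : Tri X Y Z) (hX : IsZero X) :
    Nonempty (Y ≅ Z) := by
  obtain ⟨f, g, h, H⟩ := h
  have : IsIso g := (Triangle.isZero₁_iff_isIso₂ _ H).1 hX
  exact ⟨asIso g⟩

end Triangles

/-! ### Categorical complexity -/

section Complexity

variable {D : Type u} [Category.{v} D] [Preadditive D] [HasZeroObject D]
  [HasShift D ℤ] [∀ n : ℤ, (shiftFunctor D n).Additive] [Pretriangulated D]
  [HasFiniteBiproducts D]

/-- A relation that is additive over distinguished triangles adds up along a filtration. -/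
lemma filtration_sum {M : Type*} [AddCommMonoid M] (R : D → M → Prop)
    (hzero : ∀ X, IsZero X → R X 0)
    (hiso : ∀ (X Y : D) (m : M), (X ≅ Y) → R X m → R Y m)
    (hadd : ∀ (X Y Z : D) (a b : M), Tri X Y Z → R X a → R Z b → R Y (a + b))
    {S : Set D} {F : D} {n : ℕ} {X : Fin n → D} (h : HasFiltrationIn D S F X)
    (c : Fin n → M) (hc : ∀ i, R (X i) (c i)) : R F (∑ i, c i) := by
  obtain ⟨A, hA0, ⟨e⟩, -, hA⟩ := h
  refine hiso _ _ _ e ?_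
  have key : ∀ k : Fin (n + 1), R (A k) (∑ i : Fin n, if i.castSucc < k then c i else 0) := by
    intro k
    induction k using Fin.induction with
    | zero => simpa using hzero _ hA0
    | succ k ih =>
      have := hadd _ _ _ _ _ (hA k) ih (hc k)
      convert this using 1
      rw [← Finset.sum_erase_add _ _ (Finset.mem_univ k),
        ← Finset.sum_erase_add (a := k) (f := fun i : Fin n => if i.castSucc < k.castSucc then c i else 0)
          _ (Finset.mem_univ k)]
      simp only [Fin.castSucc_lt_succ_iff, le_refl, if_true, lt_irrefl, if_false, add_zero,
        Fin.castSucc_lt_castSucc_iff]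
      congr 1
      refine Finset.sum_congr rfl fun i hi => ?_
      simp [lt_iff_le_and_ne, Finset.ne_of_mem_erase hi]
  simpa [Fin.castSucc_lt_last] using key (Fin.last n)

lemma hasFiltration_zero {F : D} (hF : IsZero F) (X : Fin 0 → D) :
    HasFiltrationIn D Set.univ F X :=
  ⟨fun _ => F, hF, ⟨Iso.refl _⟩, fun _ => trivial, fun i => i.elim0⟩

lemma hasFiltration_snoc {n : ℕ} {X : Fin n → D} {E F Y : D}
    (h : HasFiltrationIn D Set.univ E X) (ht : Tri E F Y) :
    HasFiltrationIn D Set.univ F (Fin.snoc X Y : Fin (n + 1) → D) := by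
  obtain ⟨A, hA0, ⟨e⟩, -, hA⟩ := h
  have key : ∀ i : Fin (n + 1),
      Tri ((Fin.snoc A F : Fin (n + 2) → D) i.castSucc) ((Fin.snoc A F : Fin (n + 2) → D) i.succ)
        ((Fin.snoc X Y : Fin (n + 1) → D) i) := by
    intro i
    refine Fin.lastCases ?_ (fun i => ?_) i
    · rw [Fin.succ_last, Fin.snoc_castSucc (α := fun _ => D), Fin.snoc_last, Fin.snoc_last]
      exact ht.of_iso e.symm (Iso.refl _) (Iso.refl _)
    · rw [← Fin.castSucc_succ, Fin.snoc_castSucc (α := fun _ => D),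
        Fin.snoc_castSucc (α := fun _ => D), Fin.snoc_castSucc (α := fun _ => D)]
      exact hA i
  refine ⟨Fin.snoc A F, ?_, ⟨eqToIso (by simp)⟩, fun _ => trivial, key⟩
  have : (0 : Fin (n + 2)) = (0 : Fin (n + 1)).castSucc := rfl
  rw [this, Fin.snoc_castSucc]; exact hA0

lemma hasFiltration_init {n : ℕ} {X : Fin (n + 1) → D} {F : D}
    (h : HasFiltrationIn D Set.univ F X) :
    ∃ E, HasFiltrationIn D Set.univ E (fun i : Fin n => X i.castSucc) ∧ Tri E F (X (Fin.last n)) := by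
  obtain ⟨A, hA0, ⟨e⟩, -, hA⟩ := h
  refine ⟨A (Fin.last n).castSucc, ⟨fun i => A i.castSucc, hA0, ⟨Iso.refl _⟩, fun _ => trivial,
    fun i => ?_⟩, ?_⟩
  · exact hA i.castSucc
  · exact Tri.of_iso (hA (Fin.last n)) (Iso.refl _) e (Iso.refl _)

lemma hasFiltration_iso {n : ℕ} {X : Fin n → D} {E F : D}
    (h : HasFiltrationIn D Set.univ E X) (e : E ≅ F) : HasFiltrationIn D Set.univ F X := by
  obtain ⟨A, hA0, ⟨e'⟩, h1, hA⟩ := h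
  exact ⟨A, hA0, ⟨e' ≪≫ e⟩, h1, hA⟩

/-- `Bu G t c E`: the object `E` is built from `0` by successively adding shifts `G⟦k⟧`, at a
total cost `c = ∑ exp (k t)`. -/
inductive Bu (G : D) (t : ℝ) : ℝ → D → Prop
  | zero (E : D) (hE : IsZero E) : Bu G t 0 E
  | step (c : ℝ) (A B : D) (k : ℤ) (h : Bu G t c A) (hT : Tri A B (G⟦k⟧)) :
      Bu G t (c + Real.exp (k * t)) B

/-- `RB G t c E`: the object `E` is a retract of an object built from shifts of `G` at cost
`c`. -/
def RB (G : D) (t : ℝ) (c : ℝ) (E : D) : Prop := ∃ M, Bu G t c M ∧ Nonempty (Retract E M)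

variable {G : D} {t : ℝ}

lemma Bu.nonneg {c : ℝ} {E : D} (h : Bu G t c E) : 0 ≤ c := by
  induction h with
  | zero => rfl
  | step => positivity

lemma Bu.iso {c : ℝ} {E E' : D} (h : Bu G t c E) (e : E ≅ E') : Bu G t c E' := by
  cases h with
  | zero _ hE => exact .zero _ (hE.of_iso e.symm)
  | step c A _ k h hT => exact .step c A _ k h (hT.of_iso (Iso.refl _) e (Iso.refl _))

lemma bu_iff {c : ℝ} {E : D} : Bu G t c E ↔ ∃ (m : ℕ) (k : Fin m → ℤ),
    HasFiltrationIn D Set.univ E (fun i => G⟦k i⟧) ∧ c = ∑ i, Real.exp ((k i : ℝ) * t) := by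
  constructor
  · intro h
    induction h with
    | zero E hE => exact ⟨0, Fin.elim0, hasFiltration_zero hE _, by simp⟩
    | step c A B k h hT ih =>
      obtain ⟨m, K, hK, rfl⟩ := ih
      refine ⟨m + 1, Fin.snoc K k, ?_, by simp [Fin.sum_univ_castSucc]⟩
      convert hasFiltration_snoc hK hT using 2 with i
      refine Fin.lastCases ?_ (fun i => ?_) i <;> simp
  · rintro ⟨m, k, hk, rfl⟩
    induction m generalizing E with
    | zero =>
      obtain ⟨A, hA0, ⟨e⟩, -, -⟩ := hk
      simpa using Bu.zero (G := G) (t := t) E (hA0.of_iso e.symm)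
    | succ m ih =>
      obtain ⟨E', h1, h2⟩ := hasFiltration_init hk
      rw [Fin.sum_univ_castSucc]
      exact .step _ _ _ _ (ih (fun i => k i.castSucc) h1) h2

lemma Bu.shift {c : ℝ} {E : D} (h : Bu G t c E) (n : ℤ) :
    Bu G t (Real.exp (n * t) * c) (E⟦n⟧) := by
  induction h with
  | zero E hE => simpa using Bu.zero (G := G) (t := t) _ ((shiftFunctor D n).map_isZero hE)
  | step c A B k h hT ih =>
    have := Bu.step _ _ _ (k + n) ih ((hT.shift n).of_iso (Iso.refl _) (Iso.refl _)
      ((shiftFunctorAdd D k n).symm.app G))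
    convert this using 1
    rw [mul_add, ← Real.exp_add]; push_cast; ring_nf

lemma RB.retract {c : ℝ} {E E' : D} (h : RB G t c E) (ρ : Retract E' E) : RB G t c E' := by
  obtain ⟨M, hM, ⟨σ⟩⟩ := h
  exact ⟨M, hM, ⟨ρ.trans σ⟩⟩

lemma RB.iso {c : ℝ} {E E' : D} (h : RB G t c E) (e : E ≅ E') : RB G t c E' :=
  h.retract ⟨e.inv, e.hom, by simp⟩

lemma RB.step {c : ℝ} {A B : D} {k : ℤ} (h : RB G t c A) (hT : Tri A B (G⟦k⟧)) :
    RB G t (c + Real.exp (k * t)) B := by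
  obtain ⟨M, hM, ⟨σ⟩⟩ := h
  obtain ⟨A', hA', ⟨τ⟩⟩ := hT.retract_left σ
  exact ⟨A', .step _ _ _ _ hM hA', ⟨τ⟩⟩

lemma RB.tri_bu {c₁ c₂ : ℝ} {E₁ E B : D} (h₁ : RB G t c₁ E₁) (h₂ : Bu G t c₂ B)
    (hT : Tri E₁ E B) : RB G t (c₁ + c₂) E := by
  induction h₂ generalizing E with
  | zero B hB =>
    obtain ⟨e⟩ := hT.iso_of_isZero_right hB
    simpa using h₁.iso e
  | step c A B k h hT' ih =>
    obtain ⟨V, M, hV, hM, ⟨ρ⟩⟩ := weak_octahedral hT hT'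
    rw [← add_assoc]
    exact ((ih hV).step hM).retract ρ

lemma RB.tri {c₁ c₂ : ℝ} {E₁ E E₃ : D} (h₁ : RB G t c₁ E₁) (h₂ : RB G t c₂ E₃)
    (hT : Tri E₁ E E₃) : RB G t (c₁ + c₂) E := by
  obtain ⟨B, hB, ⟨ρ⟩⟩ := h₂
  obtain ⟨E', hE', ⟨σ⟩⟩ := hT.retract_right ρ
  exact (h₁.tri_bu hB hE').retract σ

lemma RB.shift {c : ℝ} {E : D} (h : RB G t c E) (n : ℤ) :
    RB G t (Real.exp (n * t) * c) (E⟦n⟧) := by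
  obtain ⟨M, hM, ⟨ρ⟩⟩ := h
  exact ⟨_, hM.shift n, ⟨ρ.map (shiftFunctor D n)⟩⟩

/-- A split monomorphism in a pretriangulated category is the inclusion of a direct summand. -/
lemma exists_iso_biprod {E M : D} (ρ : Retract E M) : ∃ F, Nonempty (M ≅ E ⊞ F) := by
  obtain ⟨F, g, h, H⟩ := distinguished_cocone_triangle ρ.i
  have h0 : h = 0 := by
    have : h ≫ ρ.i⟦(1 : ℤ)⟧' = 0 := tri_comp₃₁ H
    have h' := congrArg (· ≫ ρ.r⟦(1 : ℤ)⟧') this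
    simpa [← Functor.map_comp] using h'
  obtain ⟨e, -⟩ := exists_iso_binaryBiproduct_of_distTriang _ H h0
  exact ⟨F, ⟨e⟩⟩

lemma rb_iff {c : ℝ} {E : D} : RB G t c E ↔ ∃ F, Bu G t c (E ⊞ F) := by
  constructor
  · rintro ⟨M, hM, ⟨ρ⟩⟩
    obtain ⟨F, ⟨e⟩⟩ := exists_iso_biprod ρ
    exact ⟨F, hM.iso e⟩
  · rintro ⟨F, h⟩
    exact ⟨_, h, ⟨⟨biprod.inl, biprod.fst, by simp⟩⟩⟩

lemma complexity_eq (E : D) :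
    complexity D t G E = sInf {c | ∃ r, RB G t r E ∧ c = ENNReal.ofReal r} := by
  unfold complexity complexityIn
  congr 1
  ext c
  simp only [Set.mem_ofPred_eq, rb_iff, bu_iff]
  constructor
  · rintro ⟨m, k, F', -, h, rfl⟩
    exact ⟨_, ⟨F', m, k, h, rfl⟩, rfl⟩
  · rintro ⟨_, ⟨F', m, k, h, rfl⟩, rfl⟩
    exact ⟨m, k, F', trivial, h, rfl⟩

lemma complexity_le {E : D} {c : ℝ} (h : RB G t c E) :
    complexity D t G E ≤ ENNReal.ofReal c := by
  rw [complexity_eq]; exact sInf_le ⟨c, h, rfl⟩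

lemma RB.nonneg {c : ℝ} {E : D} (h : RB G t c E) : 0 ≤ c := by
  obtain ⟨M, hM, -⟩ := h; exact hM.nonneg

lemma complexity_tri {E₁ E E₃ : D} (hT : Tri E₁ E E₃) :
    complexity D t G E ≤ complexity D t G E₁ + complexity D t G E₃ := by
  rw [complexity_eq E₁, complexity_eq E₃, ENNReal.sInf_add]
  refine le_iInf₂ ?_
  rintro _ ⟨a, ha, rfl⟩
  rw [add_comm, ENNReal.sInf_add]
  refine le_iInf₂ ?_
  rintro _ ⟨b, hb, rfl⟩
  rw [add_comm, ← ENNReal.ofReal_add ha.nonneg hb.nonneg]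
  exact complexity_le (ha.tri hb hT)

lemma complexity_zero {E : D} (hE : IsZero E) : complexity D t G E = 0 := by
  have : RB G t 0 E := ⟨E, .zero E hE, ⟨Retract.refl E⟩⟩
  simpa using complexity_le this

lemma complexity_retract {E E' : D} (ρ : Retract E' E) :
    complexity D t G E' ≤ complexity D t G E := by
  rw [complexity_eq E]
  refine le_sInf ?_
  rintro _ ⟨a, ha, rfl⟩
  exact complexity_le (ha.retract ρ)

lemma complexity_shift (E : D) (n : ℤ) :
    complexity D t G (E⟦n⟧) ≤ ENNReal.ofReal (Real.exp (n * t)) * complexity D t G E := by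
  rw [complexity_eq E, sInf_eq_iInf, ENNReal.mul_iInf_of_ne (by simp [Real.exp_pos]) (by simp)]
  refine le_iInf fun c => ?_
  rw [ENNReal.mul_iInf_of_ne (by simp [Real.exp_pos]) (by simp)]
  refine le_iInf ?_
  revert c
  rintro _ ⟨a, ha, rfl⟩
  rw [← ENNReal.ofReal_mul (by positivity)]
  exact complexity_le (ha.shift n)

lemma complexity_lt_top (hG : IsSplitGenerator D G) (E : D) : complexity D t G E < ∞ := by
  obtain ⟨m, k, F', -, h⟩ := hG.2 E trivial
  have : RB G t _ E := rb_iff.2 ⟨F', bu_iff.2 ⟨m, k, h, rfl⟩⟩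
  exact (complexity_le this).trans_lt ENNReal.ofReal_lt_top

end Complexity

/-! ### The heart of a t-structure is abelian -/

section Heart

variable {D : Type u} [Category.{v} D] [Preadditive D] [HasZeroObject D]
  [HasShift D ℤ] [∀ n : ℤ, (shiftFunctor D n).Additive] [Pretriangulated D]
  (t : Triangulated.TStructure D)

lemma trunc_tri (n : ℤ) (X : D) : Triangle.mk ((t.truncLTι n).app X) ((t.truncGEπ n).app X)
    ((t.truncGEδLT n).app X) ∈ distTriang D :=
  t.triangleLTGE_distinguished n X

section

variable {X Y Z : D} {f : X ⟶ Y} {g : Y ⟶ Z} {h : Z ⟶ X⟦(1 : ℤ)⟧}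

lemma tri_rot (H : Triangle.mk f g h ∈ distTriang D) :
    Triangle.mk g h (-f⟦(1 : ℤ)⟧') ∈ distTriang D :=
  rot_of_distTriang _ H

lemma tri_desc_left (H : Triangle.mk f g h ∈ distTriang D) {W : D} (φ : Z ⟶ W) (w : g ≫ φ = 0) :
    ∃ ψ : X⟦(1 : ℤ)⟧ ⟶ W, φ = h ≫ ψ :=
  tri_desc_mid (tri_rot H) φ w

lemma Tri.rot (h : Tri X Y Z) : Tri Y Z (X⟦(1 : ℤ)⟧) := by
  obtain ⟨f, g, h, H⟩ := h
  exact ⟨_, _, _, tri_rot H⟩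

lemma Tri.invRot (h : Tri X Y Z) : Tri (Z⟦(-1 : ℤ)⟧) X Y := by
  obtain ⟨f, g, h, H⟩ := h
  exact ⟨_, _, _, inv_rot_of_distTriang _ H⟩

lemma le_mid (H : Tri X Y Z) (n : ℤ) (h₁ : t.IsLE X n) (h₃ : t.IsLE Z n) : t.IsLE Y n := by
  obtain ⟨f, g, h, H⟩ := H
  exact t.isLE₂ _ H n h₁ h₃

lemma ge_mid (H : Tri X Y Z) (n : ℤ) (h₁ : t.IsGE X n) (h₃ : t.IsGE Z n) : t.IsGE Y n := by
  obtain ⟨f, g, h, H⟩ := H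
  exact t.isGE₂ _ H n h₁ h₃

lemma le_right (H : Tri X Y Z) (n : ℤ) (h₁ : t.IsLE X (n + 1)) (h₂ : t.IsLE Y n) :
    t.IsLE Z n :=
  le_mid t H.rot n h₂ (t.isLE_shift X (n + 1) 1 n (by lia))

lemma ge_left (H : Tri X Y Z) (n : ℤ) (h₂ : t.IsGE Y n) (h₃ : t.IsGE Z (n - 1)) :
    t.IsGE X n :=
  ge_mid t H.invRot n (t.isGE_shift Z (n - 1) (-1) n (by lia)) h₂

end

lemma le_truncGE (m n : ℤ) (X : D) (hX : t.IsLE X n) : t.IsLE ((t.truncGE m).obj X) n := by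
  by_cases h : m - 2 ≤ n
  · exact le_right t ⟨_, _, _, trunc_tri t m X⟩ n (t.isLE_truncLT_obj X _ _ (by lia)) hX
  · have : t.IsLE X (m - 1) := t.isLE_of_le X n (m - 1) (by lia)
    exact t.isLE_of_isZero (t.isZero_truncGE_obj_of_isLE (m - 1) m (by lia) X) n

lemma ge_truncLT (m n : ℤ) (X : D) (hX : t.IsGE X n) : t.IsGE ((t.truncLT m).obj X) n := by
  by_cases h : n ≤ m + 1
  · exact ge_left t ⟨_, _, _, trunc_tri t m X⟩ n hX (t.isGE_truncGE_obj X _ _ (by lia))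
  · have : t.IsGE X m := t.isGE_of_ge X m n (by lia)
    exact t.isGE_of_isZero (t.isZero_truncLT_obj_of_isGE m X) n

/-- The heart, as a category in its own right. -/
abbrev Hrt := t.heart.FullSubcategory

/-- The inclusion of the heart. -/
abbrev ιH : Hrt t ⥤ D := t.heart.ι

variable {t}

instance (X : Hrt t) : t.IsLE X.obj 0 := ((t.mem_heart_iff _).1 X.property).1
instance (X : Hrt t) : t.IsGE X.obj 0 := ((t.mem_heart_iff _).1 X.property).2

variable (t) in
lemma ι_neg ⦃X Y : Hrt t⦄ ⦃n : ℤ⦄ (f : (ιH t).obj X ⟶ ((ιH t).obj Y)⟦n⟧) (hn : n < 0) :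
    f = 0 := by
  have h1 : t.IsLE ((ιH t).obj X) 0 := inferInstanceAs (t.IsLE X.obj 0)
  have : t.IsGE (((ιH t).obj Y)⟦n⟧) (-n) := by
    have h1 : t.IsGE ((ιH t).obj Y) 0 := inferInstanceAs (t.IsGE Y.obj 0)
    exact t.isGE_shift _ 0 n (-n) (by lia)
  exact t.zero f 0 (-n) (by lia)

/-- The cone of a morphism of the heart is an extension of an object `Q` of the heart by a shift
`K⟦1⟧` of an object of the heart. -/
lemma cone_heart {X Y : Hrt t} {Z : D} (H : Tri X.obj Y.obj Z) :
    ∃ K Q : Hrt t, ∃ (α : K.obj⟦(1 : ℤ)⟧ ⟶ Z) (β : Z ⟶ Q.obj)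
      (γ : Q.obj ⟶ (K.obj⟦(1 : ℤ)⟧)⟦(1 : ℤ)⟧), Triangle.mk α β γ ∈ distTriang D := by
  have hZ : t.IsLE Z 0 := le_right t H 0 (t.isLE_of_le _ 0 1 (by lia)) inferInstance
  have hZ' : t.IsGE Z (-1) := ge_mid t H.rot (-1) (t.isGE_of_ge _ (-1) 0 (by lia))
    (t.isGE_shift _ 0 1 (-1) (by lia))
  let Q : Hrt t := ⟨(t.truncGE 0).obj Z, (t.mem_heart_iff _).2
    ⟨le_truncGE t 0 0 Z hZ, t.isGE_truncGE_obj ..⟩⟩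
  have hK : t.IsGE ((t.truncLT 0).obj Z) (-1) := ge_truncLT t 0 (-1) Z hZ'
  have hK' : t.IsLE ((t.truncLT 0).obj Z) (-1) := t.isLE_truncLT_obj Z _ _ (by lia)
  let K : Hrt t := ⟨((t.truncLT 0).obj Z)⟦(-1 : ℤ)⟧, (t.mem_heart_iff _).2
    ⟨t.isLE_shift _ (-1) (-1) 0 (by lia), t.isGE_shift _ (-1) (-1) 0 (by lia)⟩⟩
  let e : K.obj⟦(1 : ℤ)⟧ ≅ (t.truncLT 0).obj Z :=
    (shiftFunctorCompIsoId D (-1 : ℤ) 1 (by lia)).app _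
  refine ⟨K, Q, e.hom ≫ (t.truncLTι 0).app Z, (t.truncGEπ 0).app Z,
    (t.truncGEδLT 0).app Z ≫ e.inv⟦1⟧', ?_⟩
  refine isomorphic_distinguished _ (trunc_tri t 0 Z) _ ?_
  refine Triangle.isoMk _ _ e (Iso.refl _) (Iso.refl _) ?_ ?_ ?_
  · change (e.hom ≫ (t.truncLTι 0).app Z) ≫ 𝟙 _ = e.hom ≫ (t.truncLTι 0).app Z
    simp
  · change (t.truncGEπ 0).app Z ≫ 𝟙 _ = 𝟙 _ ≫ (t.truncGEπ 0).app Z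
    simp
  · change ((t.truncGEδLT 0).app Z ≫ e.inv⟦1⟧') ≫ e.hom⟦1⟧' = 𝟙 _ ≫ (t.truncGEδLT 0).app Z
    rw [Category.assoc, ← Functor.map_comp]
    simp

open Triangulated

lemma admissible_top : AbelianSubcategory.admissibleMorphism (ιH t) = ⊤ := by
  ext X Y f
  simp only [MorphismProperty.top_apply, iff_true]
  intro Z f₂ f₃ H
  exact cone_heart ⟨_, _, _, H⟩

open ZeroObject in
instance : HasZeroObject (Hrt t) := by
  refine ⟨⟨(0 : D), (t.mem_heart_iff _).2 ⟨inferInstance, inferInstance⟩⟩, ?_⟩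
  rw [IsZero.iff_id_eq_zero]
  apply (ιH t).map_injective
  exact (isZero_zero D).eq_of_src _ _

lemma isZero_heart_iff (X : Hrt t) : IsZero X ↔ IsZero X.obj := by
  constructor
  · exact fun h => (ιH t).map_isZero h
  · intro h
    rw [IsZero.iff_id_eq_zero]
    exact (ιH t).map_injective (h.eq_of_src _ _)

variable [HasFiniteBiproducts D]

instance : HasBinaryBiproducts (Hrt t) := by
  refine ⟨fun X Y => ?_⟩
  have hT : Tri X.obj (X.obj ⊞ Y.obj) Y.obj := ⟨_, _, _, binaryBiproductTriangle_distinguished _ _⟩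
  let b : BinaryBicone X Y :=
    { pt := ⟨X.obj ⊞ Y.obj, (t.mem_heart_iff _).2
        ⟨le_mid t hT 0 inferInstance inferInstance, ge_mid t hT 0 inferInstance inferInstance⟩⟩
      fst := ObjectProperty.homMk biprod.fst
      snd := ObjectProperty.homMk biprod.snd
      inl := ObjectProperty.homMk biprod.inl
      inr := ObjectProperty.homMk biprod.inr
      inl_fst := (ιH t).map_injective biprod.inl_fst
      inl_snd := (ιH t).map_injective biprod.inl_snd
      inr_fst := (ιH t).map_injective biprod.inr_fst
      inr_snd := (ιH t).map_injective biprod.inr_snd }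
  exact hasBinaryBiproduct_of_total b ((ιH t).map_injective biprod.total)

instance : HasFiniteProducts (Hrt t) :=
  hasFiniteProducts_of_has_binary_and_terminal

/-- A monomorphism of the heart and its cokernel form a distinguished triangle. -/
lemma exists_tri_of_mono {X Y : Hrt t} (f : X ⟶ Y) [Mono f] :
    ∃ (Z : Hrt t) (g : Y ⟶ Z) (δ : Z.obj ⟶ X.obj⟦(1 : ℤ)⟧),
      Triangle.mk f.hom g.hom δ ∈ distTriang D := by
  obtain ⟨C, g, δ, H⟩ := distinguished_cocone_triangle f.hom
  obtain ⟨K, Q, α, β, γ, H'⟩ := cone_heart ⟨_, _, _, H⟩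
  -- the shifted kernel `K⟦1⟧ ⟶ C` vanishes because `f` is a monomorphism
  have hk : AbelianSubcategory.ιK (ι := ιH t) δ α ≫ f = 0 :=
    AbelianSubcategory.ιK_mor₁ (ι := ιH t) (f₁ := f) H α
  have hk0 : AbelianSubcategory.ιK (ι := ιH t) δ α = 0 := by
    rw [← cancel_mono f, hk, zero_comp]
  have hα : α ≫ δ = 0 := by
    have := AbelianSubcategory.shift_ι_map_ιK (ι := ιH t) δ α
    rw [hk0] at this
    simpa using this.symm
  obtain ⟨ψ, hψ⟩ := tri_lift_right H α hα
  have hK : t.IsLE (K.obj⟦(1 : ℤ)⟧) (-1) := t.isLE_shift _ 0 1 (-1) (by lia)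
  have hψ0 : ψ = 0 := t.zero ψ (-1) 0 (by lia)
  have hα0 : α = 0 := by rw [hψ, hψ0, zero_comp]
  have hC : t.heart C := by
    refine (t.mem_heart_iff _).2 ⟨le_right t ⟨_, _, _, H⟩ 0 (t.isLE_of_le _ 0 1 (by lia))
      inferInstance, ?_⟩
    rw [t.isGE_iff_orthogonal (-1) 0 (by lia)]
    intro W φ hW
    have : φ ≫ β = 0 := t.zero _ (-1) 0 (by lia)
    obtain ⟨χ, hχ⟩ := tri_lift_mid H' φ this
    rw [hχ, hα0, comp_zero]
  exact ⟨⟨C, hC⟩, ObjectProperty.homMk g, δ, H⟩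

noncomputable instance : Abelian (Hrt t) :=
  { has_kernels := ⟨fun f => AbelianSubcategory.hasKernel_of_admissibleMorphism (ι_neg t) f
      (by rw [admissible_top]; trivial)⟩
    has_cokernels := ⟨fun f => AbelianSubcategory.hasCokernel_of_admissibleMorphism (ι_neg t) f
      (by rw [admissible_top]; trivial)⟩
    normalMonoOfMono := fun f hf => by
      obtain ⟨Z, g, δ, H⟩ := exists_tri_of_mono f
      exact ⟨⟨_, _, _, AbelianSubcategory.isLimitKernelForkOfDistTriang (ι_neg t) f g δ H⟩⟩
    normalEpiOfEpi := fun f hf => by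
      obtain ⟨X, i, δ, H⟩ := AbelianSubcategory.exists_distinguished_triangle_of_epi (ι_neg t)
        admissible_top f
      exact ⟨⟨_, _, _, AbelianSubcategory.isColimitCokernelCoforkOfDistTriang (ι_neg t) i f δ H⟩⟩ }

/-- A short exact sequence of the heart is a distinguished triangle. -/
lemma tri_of_shortExact {S : ShortComplex (Hrt t)} (hS : S.ShortExact) :
    Tri S.X₁.obj S.X₂.obj S.X₃.obj := by
  have := hS.mono_f
  obtain ⟨Z, g, δ, H⟩ := exists_tri_of_mono S.f
  have h₁ := AbelianSubcategory.isColimitCokernelCoforkOfDistTriang (ι_neg t) S.f g δ H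
  have h₂ := hS.gIsCokernel
  have e : Z ≅ S.X₃ := IsColimit.coconePointUniqueUpToIso h₁ h₂
  exact Tri.of_iso ⟨_, _, _, H⟩ (Iso.refl _) (Iso.refl _) ((ιH t).mapIso e)

/-- Distinguished triangles with vertices in the heart are short exact sequences. -/
lemma shortExact_of_tri {X Y Z : Hrt t} (h : Tri X.obj Y.obj Z.obj) :
    ∃ (f : X ⟶ Y) (g : Y ⟶ Z) (w : f ≫ g = 0), (ShortComplex.mk f g w).ShortExact := by
  obtain ⟨f, g, δ, H⟩ := h
  let f' : X ⟶ Y := ObjectProperty.homMk f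
  let g' : Y ⟶ Z := ObjectProperty.homMk g
  have h₁ := AbelianSubcategory.isLimitKernelForkOfDistTriang (ι_neg t) f' g' δ H
  have h₂ := AbelianSubcategory.isColimitCokernelCoforkOfDistTriang (ι_neg t) f' g' δ H
  have w : f' ≫ g' = 0 := (ιH t).map_injective (tri_comp₁₂ H)
  refine ⟨f', g', w, ?_⟩
  have : Mono f' := mono_of_isLimit_fork h₁
  have : Epi g' := epi_of_isColimit_cofork h₂
  exact { exact := ShortComplex.exact_of_f_is_kernel _ h₁ }

end Heart

/-! ### Cohomology with values in the heart -/

section Cohomology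

variable {D : Type u} [Category.{v} D] [Preadditive D] [HasZeroObject D]
  [HasShift D ℤ] [∀ n : ℤ, (shiftFunctor D n).Additive] [Pretriangulated D]
  [HasFiniteBiproducts D]
  (t : Triangulated.TStructure D)

lemma le_truncLT_one (X : D) : t.IsLE ((t.truncLT 1).obj X) 0 :=
  t.isLE_truncLT_obj X 1 0 (by lia)

/-- The cohomology functor `H⁰` of a t-structure, as the composition `τ^{≥ 0} τ^{≤ 0}`. -/
noncomputable def H0 : D ⥤ Hrt t :=
  t.heart.lift (t.truncLT 1 ⋙ t.truncGE 0) fun X => (t.mem_heart_iff _).2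
    ⟨le_truncGE t 0 0 _ (le_truncLT_one t X), t.isGE_truncGE_obj ..⟩

/-- The projection `τ^{≤ 0} X ⟶ H⁰ X`. -/
noncomputable def πH (X : D) : (t.truncLT 1).obj X ⟶ ((H0 t).obj X).obj :=
  (t.truncGEπ 0).app ((t.truncLT 1).obj X)

variable {t}

lemma πH_naturality {X Y : D} (f : X ⟶ Y) :
    πH t X ≫ ((H0 t).map f).hom = (t.truncLT 1).map f ≫ πH t Y :=
  ((t.truncGEπ 0).naturality ((t.truncLT 1).map f)).symm

lemma H0_tri (X : D) : ∃ (δ : ((H0 t).obj X).obj ⟶ ((t.truncLT 0).obj ((t.truncLT 1).obj X))⟦(1 : ℤ)⟧),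
    Triangle.mk ((t.truncLTι 0).app ((t.truncLT 1).obj X)) (πH t X) δ ∈ distTriang D :=
  ⟨_, trunc_tri t 0 _⟩

lemma H0_isZero_of_ge {X : D} (hX : t.IsGE X 1) : IsZero ((H0 t).obj X) := by
  rw [isZero_heart_iff]
  exact (t.truncGE 0).map_isZero (t.isZero_truncLT_obj_of_isGE 1 X)

lemma truncLT_one_iso {X : D} (hX : t.IsLE X 0) : Nonempty ((t.truncLT 1).obj X ≅ X) := by
  have := (t.isLE_iff_isIso_truncLTι_app 0 1 (by lia) X).1 hX
  exact ⟨asIso ((t.truncLTι 1).app X)⟩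

lemma H0_isZero_of_le {X : D} (hX : t.IsLE X (-1)) : IsZero ((H0 t).obj X) := by
  rw [isZero_heart_iff]
  obtain ⟨e⟩ := truncLT_one_iso (t.isLE_of_le X (-1) 0 (by lia))
  have := t.isLE_of_iso e.symm (-1)
  exact t.isZero_truncGE_obj_of_isLE (-1) 0 (by lia) _

lemma H0_heart {X : Hrt t} : Nonempty ((H0 t).obj X.obj ≅ X) := by
  obtain ⟨e⟩ := truncLT_one_iso (X := X.obj) (t := t) inferInstance
  have : t.IsGE ((t.truncLT 1).obj X.obj) 0 := t.isGE_of_iso e.symm 0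
  have := (t.isGE_iff_isIso_truncGEπ_app 0 _).1 this
  exact ⟨(ιH t).preimageIso ((asIso ((t.truncGEπ 0).app ((t.truncLT 1).obj X.obj))).symm ≪≫ e)⟩

lemma H0_map_comp_zero {X Y Z : D} {f : X ⟶ Y} {g : Y ⟶ Z} (w : f ≫ g = 0) :
    (H0 t).map f ≫ (H0 t).map g = 0 := by
  rw [← Functor.map_comp, w]
  apply (ιH t).map_injective
  change (t.truncGE 0).map ((t.truncLT 1).map (0 : X ⟶ Z)) = 0
  simp

/-- `H⁰` is a homological functor. The argument constructs the required refinement from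
truncations of iterated cocones, and so does not use the octahedral axiom. -/
lemma H0_exact {X Y Z : D} {f : X ⟶ Y} {g : Y ⟶ Z} {h : Z ⟶ X⟦(1 : ℤ)⟧}
    (H : Triangle.mk f g h ∈ distTriang D) :
    (ShortComplex.mk ((H0 t).map f) ((H0 t).map g) (H0_map_comp_zero (tri_comp₁₂ H))).Exact := by
  rw [ShortComplex.exact_iff_exact_up_to_refinements]
  intro A (α : A ⟶ (H0 t).obj Y) (hα : α ≫ (H0 t).map g = 0)
  have hα' : α.hom ≫ ((H0 t).map g).hom = 0 := (ιH t).congr_map hα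
  obtain ⟨δY, HY⟩ := H0_tri (t := t) Y
  obtain ⟨δZ, HZ⟩ := H0_tri (t := t) Z
  have hPY : t.IsLE ((t.truncLT 0).obj ((t.truncLT 1).obj Y)) (-1) :=
    t.isLE_truncLT_obj _ _ _ (by lia)
  have hPZ : t.IsLE ((t.truncLT 0).obj ((t.truncLT 1).obj Z)) (-1) :=
    t.isLE_truncLT_obj _ _ _ (by lia)
  obtain ⟨W, r, q, HW⟩ := distinguished_cocone_triangle₂ (α.hom ≫ δY)
  have hW : t.IsLE W 0 := le_mid t ⟨_, _, _, HW⟩ 0 (t.isLE_of_le _ (-1) 0 (by lia)) inferInstance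
  -- lift `α` along `τ^{≤ 0} Y ⟶ H⁰ Y`
  obtain ⟨β, hβ⟩ := tri_lift_right HY (q ≫ α.hom) (by
    rw [Category.assoc]; exact tri_comp₂₃ HW)
  obtain ⟨γ, hγ⟩ := tri_lift_mid HZ (β ≫ (t.truncLT 1).map g) (by
    rw [Category.assoc, ← πH_naturality, ← Category.assoc, ← hβ, Category.assoc, hα', comp_zero])
  obtain ⟨W', p, s, HW'⟩ := distinguished_cocone_triangle₁ γ
  have hW' : t.IsLE W' 0 := le_mid t (Tri.invRot ⟨_, _, _, HW'⟩) 0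
    (t.isLE_shift _ (-1) (-1) 0 (by lia)) hW
  have hpγ : p ≫ γ = 0 := tri_comp₁₂ HW'
  have hpβ : p ≫ β ≫ (t.truncLT 1).map g = 0 := by
    rw [hγ, ← Category.assoc, hpγ, zero_comp]
  obtain ⟨ξ, hξ⟩ := tri_lift_mid H (p ≫ β ≫ (t.truncLTι 1).app Y) (by
    have := (t.truncLTι 1).naturality g
    dsimp at this
    rw [Category.assoc, Category.assoc, ← this, reassoc_of% hpβ, zero_comp])
  let A' : Hrt t := ⟨(t.truncGE 0).obj W', (t.mem_heart_iff _).2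
    ⟨le_truncGE t 0 0 W' hW', t.isGE_truncGE_obj ..⟩⟩
  let e : A'.obj ⟶ A.obj := t.descTruncGE (p ≫ q) 0
  have he : (t.truncGEπ 0).app W' ≫ e = p ≫ q := t.π_descTruncGE (p ≫ q) 0
  obtain ⟨ξ', hξ'⟩ : ∃ ξ' : W' ⟶ (t.truncLT 1).obj X, ξ' ≫ (t.truncLTι 1).app X = ξ :=
    ⟨t.liftTruncLT ξ 0 1 (by lia), t.liftTruncLT_ι ξ 0 1 (by lia)⟩
  let x : A'.obj ⟶ ((H0 t).obj X).obj := t.descTruncGE (ξ' ≫ πH t X) 0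
  have hx : (t.truncGEπ 0).app W' ≫ x = ξ' ≫ πH t X := t.π_descTruncGE (ξ' ≫ πH t X) 0
  have hpβ' : p ≫ β = ξ' ≫ (t.truncLT 1).map f := by
    have : t.IsLE W' (1 - 1) := hW'
    apply t.to_truncLT_obj_ext
    have h1 := (t.truncLTι 1).naturality f
    dsimp at h1
    rw [Category.assoc, hξ, Category.assoc, h1, reassoc_of% hξ']
  refine ⟨A', ObjectProperty.homMk e, ?_, ObjectProperty.homMk x, ?_⟩
  · rw [Preadditive.epi_iff_cancel_zero]
    intro B u hu
    have hu' : e ≫ u.hom = 0 := (ιH t).congr_map hu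
    have h1 : p ≫ q ≫ u.hom = 0 := by
      rw [← Category.assoc, ← he, Category.assoc, hu', comp_zero]
    obtain ⟨ψ, hψ⟩ := tri_desc_mid HW' _ h1
    rw [t.zero ψ (-1) 0 (by lia), comp_zero] at hψ
    obtain ⟨ψ', hψ'⟩ := tri_desc_left HW _ hψ
    have := t.isLE_shift ((t.truncLT 0).obj ((t.truncLT 1).obj Y)) (-1) 1 (-2) (by lia)
    rw [t.zero ψ' (-2) 0 (by lia), comp_zero] at hψ'
    exact (ιH t).map_injective hψ'
  · apply (ιH t).map_injective
    change e ≫ α.hom = x ≫ ((H0 t).map f).hom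
    apply t.from_truncGE_obj_ext (n := 0)
    rw [← Category.assoc, he, ← Category.assoc, hx, Category.assoc, Category.assoc, hβ,
      πH_naturality, ← Category.assoc, ← Category.assoc, hpβ']

end Cohomology

/-! ### Lengths in abelian categories -/

section Length

variable {A : Type u} [Category.{v} A] [Abelian A]

/-- `X` is simple or zero. -/
def SZ (X : A) : Prop := ∀ ⦃Y : A⦄ (f : Y ⟶ X) [Mono f], IsZero Y ∨ IsIso f

lemma SZ.sub {X Y : A} (hX : SZ X) (f : Y ⟶ X) [Mono f] : SZ Y := by
  intro Z g hg
  refine (hX (g ≫ f)).imp id fun (h : IsIso (g ≫ f)) => ?_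
  have : Epi f := epi_of_epi g f
  have : IsIso f := isIso_of_mono_of_epi f
  exact IsIso.of_isIso_comp_right g f

lemma SZ.quot {X Q : A} (hX : SZ X) (e : X ⟶ Q) [Epi e] : SZ Q := by
  intro Y f hf
  rcases hX (pullback.fst e f) with h | h
  · left
    rw [IsZero.iff_id_eq_zero, ← cancel_epi (pullback.snd e f)]
    exact h.eq_of_src _ _
  · right
    have h2 : Epi (pullback.snd e f ≫ f) := by
      rw [← pullback.condition]; infer_instance
    have : Epi f := epi_of_epi (pullback.snd e f) f
    exact isIso_of_mono_of_epi f

/-- `L n X`: the object `X` has a filtration with `n` factors, each of which is simple or zero;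
equivalently, `X` has length at most `n`. The step only records exactness in the middle. -/
inductive L : ℕ → A → Prop
  | zero (X : A) (h : IsZero X) : L 0 X
  | succ (n : ℕ) {Y X S : A} (f : Y ⟶ X) (g : X ⟶ S) (w : f ≫ g = 0)
      (h : (ShortComplex.mk f g w).Exact) (hS : SZ S) (hY : L n Y) : L (n + 1) X

lemma SZ.cokernel {Y X S : A} {f : Y ⟶ X} {g : X ⟶ S} {w : f ≫ g = 0}
    (h : (ShortComplex.mk f g w).Exact) (hS : SZ S) : SZ (cokernel f) := by
  have : Mono (cokernel.desc f g w) := (ShortComplex.exact_iff_mono_cokernel_desc _).1 h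
  exact hS.sub (cokernel.desc f g w)

lemma L.quot {n : ℕ} {X Q : A} (h : L n X) (e : X ⟶ Q) [Epi e] : L n Q := by
  cases h with
  | zero _ hX =>
    refine .zero _ ?_
    rw [IsZero.iff_id_eq_zero, ← cancel_epi e]
    exact hX.eq_of_src _ _
  | succ n f g w h hS hY =>
    refine .succ n (f ≫ e) (cokernel.π (f ≫ e)) (cokernel.condition _)
      (ShortComplex.exact_cokernel _) ?_ hY
    let u : Limits.cokernel f ⟶ Limits.cokernel (f ≫ e) :=
      cokernel.desc f (e ≫ cokernel.π (f ≫ e)) (by rw [← Category.assoc, cokernel.condition])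
    have hu : cokernel.π f ≫ u = e ≫ cokernel.π (f ≫ e) := cokernel.π_desc _ _ _
    have : Epi (cokernel.π f ≫ u) := by rw [hu]; infer_instance
    have : Epi u := epi_of_epi (cokernel.π f) u
    exact (SZ.cokernel h hS).quot u

lemma L.iso {n : ℕ} {X Y : A} (h : L n X) (e : X ≅ Y) : L n Y := h.quot e.hom

lemma sz_of_isZero {X : A} (h : IsZero X) : SZ X := fun Y f _ =>
  Or.inl (by
    rw [IsZero.iff_id_eq_zero, ← cancel_mono f]
    exact h.eq_of_tgt _ _)

lemma L.of_isZero {X : A} (h : IsZero X) (n : ℕ) : L n X := by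
  induction n with
  | zero => exact .zero _ h
  | succ n ih =>
    exact .succ n (𝟙 X) (0 : X ⟶ X) comp_zero
      ((ShortComplex.exact_iff_epi _ rfl).2 (inferInstanceAs (Epi (𝟙 X)))) (sz_of_isZero h) ih

/-- Lengths are subadditive over sequences that are merely exact in the middle. -/
lemma L.ext {m n : ℕ} {Y X Z : A} (i : Y ⟶ X) (p : X ⟶ Z) (w : i ≫ p = 0)
    (h : (ShortComplex.mk i p w).Exact) (hY : L m Y) (hZ : L n Z) : L (m + n) X := by
  induction hZ generalizing X with
  | zero Z hZ =>
    have : Epi i := h.epi_f (hZ.eq_of_tgt _ _)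
    exact hY.quot i
  | succ n a b wab hab hS _ ih =>
    let j : Y ⟶ pullback p a := pullback.lift i 0 (by rw [w, zero_comp])
    have hj : j ≫ pullback.fst p a = i := pullback.lift_fst _ _ _
    have hj' : j ≫ pullback.snd p a = 0 := pullback.lift_snd _ _ _
    refine .succ (m + n) (pullback.fst p a) (p ≫ b)
      (by rw [← Category.assoc, pullback.condition, Category.assoc, wab, comp_zero]) ?_ hS
      (ih j (pullback.snd p a) hj' ?_)
    · rw [ShortComplex.exact_iff_exact_up_to_refinements]
      intro B (x : B ⟶ _) (hx : x ≫ p ≫ b = 0)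
      obtain ⟨B', π, hπ, y, hy⟩ := hab.exact_up_to_refinements (x ≫ p) (by simpa using hx)
      refine ⟨B', π, hπ, pullback.lift (π ≫ x) y (by simpa using hy), ?_⟩
      exact (pullback.lift_fst _ _ _).symm
    · rw [ShortComplex.exact_iff_exact_up_to_refinements]
      intro B (x : B ⟶ pullback p a) (hx : x ≫ pullback.snd p a = 0)
      obtain ⟨B', π, hπ, y, hy⟩ := h.exact_up_to_refinements (x ≫ pullback.fst p a) (by
        change (x ≫ pullback.fst p a) ≫ p = 0
        rw [Category.assoc, pullback.condition, ← Category.assoc, hx, zero_comp])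
      refine ⟨B', π, hπ, y, ?_⟩
      change π ≫ x ≫ pullback.fst p a = y ≫ i at hy
      change π ≫ x = y ≫ j
      apply pullback.hom_ext
      · rw [Category.assoc, Category.assoc, hy, hj]
      · rw [Category.assoc, Category.assoc, hx, hj', comp_zero, comp_zero]

end Length

section HeartLength

variable {D : Type u} [Category.{v} D] [Preadditive D] [HasZeroObject D]
  [HasShift D ℤ] [∀ n : ℤ, (shiftFunctor D n).Additive] [Pretriangulated D]
  [HasFiniteBiproducts D]
  {t : Triangulated.TStructure D} {H : Set D} (hH : ∀ X, X ∈ H ↔ t.heart X)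

include hH

lemma SZ.simpleIn {X : Hrt t} (hX : SZ X) (h0 : ¬ IsZero X) : SimpleIn D H X.obj := by
  refine ⟨(hH _).2 X.property, fun h => h0 ((isZero_heart_iff X).2 h), ?_⟩
  intro A B hA hB hT
  obtain ⟨f, g, w, hS⟩ := shortExact_of_tri (t := t) (X := ⟨A, (hH _).1 hA⟩) (Y := X)
    (Z := ⟨B, (hH _).1 hB⟩) hT
  have : Mono f := hS.mono_f
  have : Epi g := hS.epi_g
  refine (hX f).imp (fun h => (isZero_heart_iff _).1 h) fun (h : IsIso f) => ?_
  have hg : g = 0 := by rw [← cancel_epi f, w, comp_zero]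
  refine (isZero_heart_iff (t := t) ⟨B, (hH _).1 hB⟩).1 ?_
  rw [IsZero.iff_id_eq_zero, ← cancel_epi g, hg, zero_comp, zero_comp]

lemma SZ.of_simpleIn {X : Hrt t} (hX : SimpleIn D H X.obj) : SZ X := by
  intro Y f hf
  obtain ⟨Z, g, δ, hT⟩ := exists_tri_of_mono f
  refine (hX.2.2 Y.obj Z.obj ((hH _).2 Y.property) ((hH _).2 Z.property) ⟨_, _, _, hT⟩).imp
    (fun h => (isZero_heart_iff _).2 h) fun h => ?_
  have : IsIso ((ιH t).map f) := (Triangle.isZero₃_iff_isIso₁ _ hT).1 h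
  exact isIso_of_reflects_iso f (ιH t)

/-- The bound `L n X` produces a composition series with at most `n` simple factors. -/
lemma L.hasLengthIn {n : ℕ} {X : Hrt t} (h : L n X) : ∃ m ≤ n, HasLengthIn D H X.obj m := by
  induction n generalizing X with
  | zero =>
    cases h with
    | zero _ h => exact ⟨0, le_rfl, Fin.elim0, fun i => i.elim0,
        hasFiltration_zero ((isZero_heart_iff X).1 h) _⟩
  | succ n ih =>
    cases h with
    | succ n f g w h hS hY =>
      have hI : L n (Limits.image f) := hY.quot (factorThruImage f)
      obtain ⟨m, hm, S, hS', hF⟩ := ih hI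
      have hse : (ShortComplex.mk (image.ι f) (cokernel.π (image.ι f))
          (cokernel.condition _)).ShortExact :=
        { exact := ShortComplex.exact_cokernel _ }
      have hT := tri_of_shortExact hse
      have hC : SZ (Limits.cokernel (image.ι f)) := by
        let u : Limits.cokernel f ⟶ Limits.cokernel (image.ι f) :=
          cokernel.desc f (cokernel.π (image.ι f)) (by
            rw [← image.fac f, Category.assoc, image.fac, cokernel.condition, comp_zero])
        have hu : cokernel.π f ≫ u = cokernel.π (image.ι f) := cokernel.π_desc _ _ _
        have : Epi (cokernel.π f ≫ u) := by rw [hu]; infer_instance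
        have : Epi u := epi_of_epi (cokernel.π f) u
        exact (SZ.cokernel h hS).quot u
      by_cases hz : IsZero (Limits.cokernel (image.ι f))
      · obtain ⟨e⟩ := hT.iso_of_isZero_right ((isZero_heart_iff _).1 hz)
        exact ⟨m, by lia, S, hS', hasFiltration_iso hF e⟩
      · refine ⟨m + 1, by lia, Fin.snoc S (Limits.cokernel (image.ι f)).obj, ?_,
          hasFiltration_snoc hF hT⟩
        intro i
        refine Fin.lastCases ?_ (fun i => ?_) i
        · simpa using hC.simpleIn hH hz
        · simpa using hS' i

end HeartLength

/-! ### The complexity of a t-structure in terms of lengths of cohomology objects -/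

section TS

variable {D : Type u} [Category.{v} D] [Preadditive D] [HasZeroObject D]
  [HasShift D ℤ] [∀ n : ℤ, (shiftFunctor D n).Additive] [Pretriangulated D]
  [HasFiniteBiproducts D]

/-- The pair `(le, ge)` as a bundled t-structure, with `le n` and `ge n` the objects whose
`n`-fold shift lies in `le` and `ge` respectively. -/
def mkT {le ge : Set D} (ht : IsTStructureIn D Set.univ le ge) : Triangulated.TStructure D where
  le n := fun X => X⟦n⟧ ∈ le
  ge n := fun X => X⟦n⟧ ∈ ge
  le_isClosedUnderIsomorphisms n :=
    ⟨fun e h => ht.le_iso ((shiftFunctor D n).mapIso e) h⟩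
  ge_isClosedUnderIsomorphisms n :=
    ⟨fun e h => ht.ge_iso ((shiftFunctor D n).mapIso e) h⟩
  le_shift n a n' h X hX := ht.le_iso ((shiftFunctorAdd' D a n' n h).app X) hX
  ge_shift n a n' h X hX := ht.ge_iso ((shiftFunctorAdd' D a n' n h).app X) hX
  zero' X Y f hX hY := ht.hom_zero X (ht.le_iso ((shiftFunctorZero D ℤ).app X) hX) Y hY f
  le_zero_le X hX := ht.shift_le _ (ht.le_iso ((shiftFunctorZero D ℤ).app X) hX)
  ge_one_le X hX := ht.ge_iso
    ((shiftFunctorAdd' D (1 : ℤ) (-1) 0 (by lia)).symm.app X) (ht.shift_ge _ hX)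
  exists_triangle_zero_one A := by
    obtain ⟨X, Y, hX, hY, f, g, h, H⟩ := ht.exists_triangle A trivial
    exact ⟨X, Y, ht.le_iso ((shiftFunctorZero D ℤ).symm.app X) hX, hY, f, g, h, H⟩

lemma mem_heart_mkT {le ge : Set D} (ht : IsTStructureIn D Set.univ le ge) (X : D) :
    X ∈ heart D le ge ↔ (mkT ht).heart X := by
  constructor
  · rintro ⟨h1, h2⟩
    exact ⟨ht.le_iso ((shiftFunctorZero D ℤ).symm.app X) h1,
      ht.ge_iso ((shiftFunctorZero D ℤ).symm.app X) h2⟩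
  · rintro ⟨h1, h2⟩
    exact ⟨ht.le_iso ((shiftFunctorZero D ℤ).app X) h1,
      ht.ge_iso ((shiftFunctorZero D ℤ).app X) h2⟩

lemma bounded_mkT {le ge : Set D} (ht : IsTStructureIn D Set.univ le ge)
    (hb : IsBoundedIn D Set.univ le ge) (X : D) :
    (∃ b, (mkT ht).IsLE X b) ∧ ∃ a, (mkT ht).IsGE X a := by
  obtain ⟨⟨b, hb⟩, ⟨a, ha⟩⟩ := hb X trivial
  exact ⟨⟨b, ⟨hb⟩⟩, ⟨a, ⟨ha⟩⟩⟩

variable (t : Triangulated.TStructure D)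

/-- The cohomology object `Hⁿ E` has length at most `m`. -/
def RL (n : ℤ) (E : D) (m : ℕ) : Prop := L m ((H0 t).obj (E⟦n⟧))

/-- The cohomology objects `Hⁿ E` have lengths at most `f n`. -/
def Bd (E : D) (f : ℤ →₀ ℕ) : Prop := ∀ n, RL t n E (f n)

variable {t}

lemma RL.quot {n : ℤ} {E E' : D} {m : ℕ} (h : RL t n E m) (ρ : Retract E' E) : RL t n E' m := by
  let σ := (ρ.map (shiftFunctor D n)).map (H0 t)
  have : Epi σ.r := ⟨fun a b hab => by
    have := congrArg (σ.i ≫ ·) hab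
    simpa using this⟩
  exact L.quot h σ.r

lemma RL.iso {n : ℤ} {E E' : D} {m : ℕ} (h : RL t n E m) (e : E ≅ E') : RL t n E' m :=
  h.quot ⟨e.inv, e.hom, by simp⟩

lemma RL.add {n : ℤ} {X Y Z : D} {a b : ℕ} (h : Tri X Y Z) (ha : RL t n X a) (hb : RL t n Z b) :
    RL t n Y (a + b) := by
  obtain ⟨f, g, h, H⟩ := h.shift n
  exact L.ext _ _ _ (H0_exact H) ha hb

lemma RL.of_isZero {n : ℤ} {X : D} (h : IsZero X) (m : ℕ) : RL t n X m :=
  L.of_isZero (H0_isZero_of_ge (t.isGE_of_isZero ((shiftFunctor D n).map_isZero h) 1)) m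

lemma RL.of_ge {n k : ℤ} {X : D} (h : t.IsGE X k) (hk : n + 1 ≤ k) (m : ℕ) : RL t n X m := by
  refine L.of_isZero (H0_isZero_of_ge ?_) m
  have := t.isGE_of_ge X (n + 1) k (by lia)
  exact t.isGE_shift X (n + 1) n 1 (by lia)

lemma RL.of_le {n k : ℤ} {X : D} (h : t.IsLE X k) (hk : k ≤ n - 1) (m : ℕ) : RL t n X m := by
  refine L.of_isZero (H0_isZero_of_le ?_) m
  have := t.isLE_of_le X k (n - 1) (by lia)
  exact t.isLE_shift X (n - 1) n (-1) (by lia)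

lemma rl_zero_iff {X : Hrt t} {m : ℕ} : L m X ↔ L m ((H0 t).obj X.obj) := by
  obtain ⟨e⟩ := H0_heart (X := X)
  exact ⟨fun h => h.iso e.symm, fun h => h.iso e⟩

lemma Bd.shift_heart {X : Hrt t} {m : ℕ} (h : L m X) (k : ℤ) :
    Bd t (X.obj⟦k⟧) (Finsupp.single (-k) m) := by
  intro n
  by_cases hn : -k = n
  · subst hn
    rw [Finsupp.single_eq_same]
    refine (rl_zero_iff.1 h).iso ((H0 t).mapIso ?_)
    exact ((shiftFunctorCompIsoId D k (-k) (by lia)).symm.app X.obj)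
  · by_cases hn' : n + 1 ≤ -k
    · exact RL.of_ge (t.isGE_shift X.obj 0 k (-k) (by lia)) hn' _
    · exact RL.of_le (t.isLE_shift X.obj 0 k (-k) (by lia)) (by lia) _

lemma Bd.iso {E E' : D} {f : ℤ →₀ ℕ} (h : Bd t E f) (e : E ≅ E') : Bd t E' f :=
  fun n => (h n).iso e

lemma Bd.retract {E E' : D} {f : ℤ →₀ ℕ} (h : Bd t E f) (ρ : Retract E' E) : Bd t E' f :=
  fun n => (h n).quot ρ

lemma Bd.add {X Y Z : D} {f g : ℤ →₀ ℕ} (h : Tri X Y Z) (hf : Bd t X f) (hg : Bd t Z g) :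
    Bd t Y (f + g) :=
  fun n => (hf n).add h (hg n)

lemma Bd.zero {X : D} (h : IsZero X) (f : ℤ →₀ ℕ) : Bd t X f :=
  fun _ => RL.of_isZero h _

/-- The weight `∑ f n e^{-ns}`. -/
noncomputable def wt (s : ℝ) : (ℤ →₀ ℕ) →+ ℝ :=
  Finsupp.liftAddHom fun n =>
    (AddMonoidHom.mulRight (Real.exp (-n * s))).comp (Nat.castAddMonoidHom ℝ)

lemma wt_single (s : ℝ) (n : ℤ) (m : ℕ) :
    wt s (Finsupp.single n m) = m * Real.exp (-n * s) := by
  simp [wt]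

lemma wt_nonneg (s : ℝ) (f : ℤ →₀ ℕ) : 0 ≤ wt s f := by
  simp only [wt, Finsupp.liftAddHom_apply]
  exact Finset.sum_nonneg fun n _ => mul_nonneg (Nat.cast_nonneg _) (Real.exp_pos _).le

lemma wt_le (s : ℝ) (f : ℤ →₀ ℕ) (n : ℤ) : f n * Real.exp (-n * s) ≤ wt s f := by
  rw [← Finsupp.single_add_erase n f, map_add, wt_single]
  have := wt_nonneg s (f.erase n)
  simpa using this

/-- The object `τ^{≥ b} E` for `E ∈ D^{≤ b}` is a shift of an object of the heart. -/
lemma top_heart {E : D} {b : ℤ} (hE : t.IsLE E b) : ∃ X : Hrt t,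
    Tri ((t.truncLT b).obj E) E (X.obj⟦-b⟧) := by
  have h1 := le_truncGE t b b E hE
  have h2 : t.IsGE ((t.truncGE b).obj E) b := t.isGE_truncGE_obj ..
  refine ⟨⟨((t.truncGE b).obj E)⟦b⟧, (t.mem_heart_iff _).2
    ⟨t.isLE_shift _ b b 0 (by lia), t.isGE_shift _ b b 0 (by lia)⟩⟩, ?_⟩
  exact Tri.of_iso ⟨_, _, _, trunc_tri t b E⟩ (Iso.refl _) (Iso.refl _)
    ((shiftFunctorCompIsoId D b (-b) (by lia)).symm.app _)

variable {H : Set D} (hH : ∀ X, X ∈ H ↔ t.heart X)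
include hH

open ZeroObject in
lemma L.of_hasLengthIn {X : Hrt t} {m : ℕ} (h : HasLengthIn D H X.obj m) : L m X := by
  obtain ⟨S, hS, hF⟩ := h
  rw [rl_zero_iff]
  have := filtration_sum (RL t 0) (fun X hX => RL.of_isZero hX 0) (fun X Y m e h => h.iso e)
    (fun X Y Z a b hT ha hb => RL.add hT ha hb) hF (fun _ => 1) (fun i => by
      let Y : Hrt t := ⟨S i, (hH _).1 (hS i).1⟩
      have hY : SZ Y := SZ.of_simpleIn hH (X := Y) (hS i)
      have hL : L 1 Y := .succ 0 (0 : (0 : Hrt t) ⟶ Y) (𝟙 Y) zero_comp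
        ((ShortComplex.exact_iff_mono _ rfl).2 (inferInstanceAs (Mono (𝟙 Y)))) hY
        (.zero _ (isZero_zero _))
      exact (rl_zero_iff.1 hL).iso ((H0 t).mapIso ((shiftFunctorZero D ℤ).symm.app (S i))))
  simp only [Finset.sum_const, Finset.card_univ, Fintype.card_fin, smul_eq_mul, mul_one] at this
  exact L.iso this ((H0 t).mapIso ((shiftFunctorZero D ℤ).app X.obj))

/-- A bound for the lengths of the cohomology objects produces a t-filtration. -/
lemma Bd.exists_filtration (s : ℝ) (a : ℤ) (N : ℕ) {E : D} {f : ℤ →₀ ℕ} (hf : Bd t E f)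
    (ha : t.IsGE E a) (hb : t.IsLE E (a - 1 + N)) :
    ∃ (m : ℕ) (k : Fin m → ℤ) (X : Fin m → D) (lam : Fin m → ℕ),
      StrictAnti k ∧ (∀ i, -(a - 1 + N) ≤ k i) ∧ (∀ i, X i ∈ H) ∧
      (∀ i, HasLengthIn D H (X i) (lam i)) ∧
      HasFiltrationIn D Set.univ E (fun i => (X i)⟦k i⟧) ∧
      ∑ i, (lam i : ℝ) * Real.exp ((k i : ℝ) * s) ≤ wt s f := by
  induction N generalizing E f with
  | zero =>
    have hE : IsZero E := t.isZero E (a - 1 + (0 : ℕ)) a (by simp)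
    exact ⟨0, Fin.elim0, Fin.elim0, Fin.elim0, fun i => i.elim0, fun i => i.elim0,
      fun i => i.elim0, fun i => i.elim0, hasFiltration_zero hE _, by simpa using wt_nonneg s f⟩
  | succ N ih =>
    obtain ⟨b, hb'⟩ : ∃ b : ℤ, b = a - 1 + (N + 1 : ℕ) := ⟨_, rfl⟩
    rw [← hb'] at hb
    obtain ⟨X, hT⟩ := top_heart hb
    have hX₁ : t.IsGE (X.obj⟦-b⟧) b := t.isGE_shift _ 0 (-b) b (by lia)
    have hE' : t.IsLE ((t.truncLT b).obj E) (b - 1) := t.isLE_truncLT_obj _ _ _ (by lia)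
    have hLX : L (f b) X := by
      have : RL t b (X.obj⟦-b⟧) (f b + 0) := (hf b).add hT.rot
        (RL.of_le (t.isLE_shift _ (b - 1) 1 (b - 2) (by lia)) (by lia) 0)
      rw [add_zero] at this
      refine rl_zero_iff.2 (L.iso this ((H0 t).mapIso ?_))
      exact (shiftFunctorCompIsoId D (-b) b (by lia)).app X.obj
    have hBE' : Bd t ((t.truncLT b).obj E) (f.erase b) := by
      intro n
      by_cases hn : n < b
      · rw [Finsupp.erase_ne (by lia)]
        have : RL t n ((t.truncLT b).obj E) (0 + f n) := RL.add hT.invRot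
          (RL.of_ge (t.isGE_shift _ b (-1) (b + 1) (by lia)) (by lia) 0) (hf n)
        rwa [zero_add] at this
      · exact RL.of_le hE' (by lia) _
    obtain ⟨m, k, Y, lam, hk, hkb, hY, hlam, hF, hsum⟩ := ih hBE' (ge_truncLT t b a E ha)
      (by convert hE' using 1; rw [hb']; push_cast; ring)
    obtain ⟨l, hl, hXl⟩ := hLX.hasLengthIn hH
    have hkb' : ∀ i, -b < k i := fun i => by have := hkb i; push_cast at hb'; lia
    refine ⟨m + 1, Fin.snoc k (-b), Fin.snoc Y X.obj, Fin.snoc lam l, ?_, ?_, ?_, ?_, ?_, ?_⟩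
    · intro i j hij
      induction i using Fin.lastCases with
      | last => exact absurd hij (not_lt.2 (Fin.le_last j))
      | cast i =>
        induction j using Fin.lastCases with
        | last => simpa using hkb' i
        | cast j => simpa using hk (by simpa using hij)
    · intro i
      rw [← hb']
      induction i using Fin.lastCases with
      | last => simp
      | cast i => simpa using (hkb' i).le
    · intro i
      induction i using Fin.lastCases with
      | last => simpa using (hH _).2 X.property
      | cast i => simpa using hY i
    · intro i
      induction i using Fin.lastCases with
      | last => simpa using hXl
      | cast i => simpa using hlam i
    · convert hasFiltration_snoc hF hT using 1
      funext i
      induction i using Fin.lastCases with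
      | last => simp
      | cast i => simp
    · rw [Fin.sum_univ_castSucc]
      simp only [Fin.snoc_castSucc, Fin.snoc_last]
      rw [← Finsupp.single_add_erase b f, map_add, wt_single, add_comm]
      refine add_le_add ?_ hsum
      push_cast
      gcongr

end TS

/-! ### The invariant of a t-structure as an additive cost function -/

section TComplexity

variable {D : Type u} [Category.{v} D] [Preadditive D] [HasZeroObject D]
  [HasShift D ℤ] [∀ n : ℤ, (shiftFunctor D n).Additive] [Pretriangulated D]
  [HasFiniteBiproducts D] {t : Triangulated.TStructure D} {H : Set D}
  (hH : ∀ X, X ∈ H ↔ t.heart X)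
  (hb : ∀ X, (∃ b, t.IsLE X b) ∧ ∃ a, t.IsGE X a)
include hH hb

omit hH in
lemma exists_amplitude (E : D) : ∃ (a : ℤ) (N : ℕ), t.IsGE E a ∧ t.IsLE E (a - 1 + N) := by
  obtain ⟨⟨b, hb⟩, ⟨a, ha⟩⟩ := hb E
  exact ⟨a, (b - a + 1).toNat, ha, t.isLE_of_le E b _ (by lia)⟩

lemma tComplexity_le (s : ℝ) {E : D} {f : ℤ →₀ ℕ} (hf : Bd t E f) :
    tComplexity D H s E ≤ ENNReal.ofReal (wt s f) := by
  obtain ⟨a, N, ha, hN⟩ := exists_amplitude hb E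
  obtain ⟨m, k, X, lam, hk, -, hX, hlam, hF, hs⟩ := hf.exists_filtration hH s a N ha hN
  have h : tComplexity D H s E ≤ ENNReal.ofReal (∑ i, (lam i : ℝ) * Real.exp ((k i : ℝ) * s)) :=
    sInf_le ⟨m, k, X, lam, hk, hX, hlam, hF, rfl⟩
  exact h.trans (ENNReal.ofReal_le_ofReal hs)

/-- The defining infimum over t-filtrations may be taken over all bounds for the lengths of the
cohomology objects, a description that is visibly subadditive over triangles. -/
lemma tComplexity_eq (s : ℝ) (E : D) :
    tComplexity D H s E = sInf {c | ∃ f, Bd t E f ∧ c = ENNReal.ofReal (wt s f)} := by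
  apply le_antisymm
  · refine le_sInf ?_
    rintro _ ⟨f, hf, rfl⟩
    exact tComplexity_le hH hb s hf
  · refine le_sInf ?_
    rintro _ ⟨m, k, X, lam, hk, hX, hlam, hF, rfl⟩
    refine sInf_le ⟨∑ i, Finsupp.single (-k i) (lam i), ?_, ?_⟩
    · refine filtration_sum (Bd t) (fun X hX => Bd.zero hX 0) (fun X Y m e h => h.iso e)
        (fun X Y Z a b hT ha hb => Bd.add hT ha hb) hF _ fun i => ?_
      exact Bd.shift_heart (X := ⟨X i, (hH _).1 (hX i)⟩) (L.of_hasLengthIn hH (hlam i)) (k i)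
    · simp [wt_single]

lemma tComplexity_tri (s : ℝ) {X Y Z : D} (h : Tri X Y Z) :
    tComplexity D H s Y ≤ tComplexity D H s X + tComplexity D H s Z := by
  rw [tComplexity_eq hH hb s X, tComplexity_eq hH hb s Z, ENNReal.sInf_add]
  refine le_iInf₂ ?_
  rintro _ ⟨f, hf, rfl⟩
  rw [add_comm, ENNReal.sInf_add]
  refine le_iInf₂ ?_
  rintro _ ⟨g, hg, rfl⟩
  rw [add_comm, ← ENNReal.ofReal_add (wt_nonneg s f) (wt_nonneg s g), ← map_add]
  exact tComplexity_le hH hb s (hf.add h hg)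

lemma tComplexity_retract (s : ℝ) {E E' : D} (ρ : Retract E' E) :
    tComplexity D H s E' ≤ tComplexity D H s E := by
  rw [tComplexity_eq hH hb s E]
  refine le_sInf ?_
  rintro _ ⟨f, hf, rfl⟩
  exact tComplexity_le hH hb s (hf.retract ρ)

lemma tComplexity_zero (s : ℝ) {E : D} (hE : IsZero E) : tComplexity D H s E = 0 := by
  simpa using tComplexity_le hH hb s (Bd.zero hE 0)

omit hH hb [HasFiniteBiproducts D] in
lemma wt_mapDomain (s : ℝ) (k : ℤ) (f : ℤ →₀ ℕ) :
    wt s (Finsupp.mapDomain (Equiv.subRight k) f) = Real.exp (k * s) * wt s f := by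
  induction f using Finsupp.induction_linear with
  | zero => simp
  | add f g hf hg => rw [Finsupp.mapDomain_add, map_add, map_add, hf, hg, mul_add]
  | single n m =>
    rw [Finsupp.mapDomain_single, wt_single, wt_single, mul_left_comm, ← Real.exp_add]
    simp only [Equiv.subRight_apply]
    push_cast
    ring_nf

omit hH hb in
lemma Bd.shift {E : D} {f : ℤ →₀ ℕ} (h : Bd t E f) (k : ℤ) :
    Bd t (E⟦k⟧) (Finsupp.mapDomain (Equiv.subRight k) f) := by
  intro n
  rw [Finsupp.mapDomain_equiv_apply]
  refine L.iso (h (n + k)) ((H0 t).mapIso ?_)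
  exact (shiftFunctorAdd' D k n (n + k) (by lia)).app E

lemma tComplexity_shift (s : ℝ) (E : D) (k : ℤ) :
    tComplexity D H s (E⟦k⟧) ≤ ENNReal.ofReal (Real.exp (k * s)) * tComplexity D H s E := by
  rw [tComplexity_eq hH hb s E, sInf_eq_iInf,
    ENNReal.mul_iInf_of_ne (by simp [Real.exp_pos]) (by simp)]
  refine le_iInf fun c => ?_
  rw [ENNReal.mul_iInf_of_ne (by simp [Real.exp_pos]) (by simp)]
  refine le_iInf ?_
  rintro ⟨f, hf, rfl⟩
  rw [← ENNReal.ofReal_mul (Real.exp_pos _).le, ← wt_mapDomain]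
  exact tComplexity_le hH hb s (hf.shift k)

lemma exists_bd (hl : ∀ X ∈ H, ∃ n, HasLengthIn D H X n) (E : D) : ∃ f, Bd t E f := by
  obtain ⟨a, N, ha, hN⟩ := exists_amplitude hb E
  induction N generalizing E with
  | zero => exact ⟨0, Bd.zero (t.isZero E (a - 1 + (0 : ℕ)) a (by simp)) 0⟩
  | succ N ih =>
    obtain ⟨X, hT⟩ := top_heart hN
    obtain ⟨f, hf⟩ := ih ((t.truncLT (a - 1 + (N + 1 : ℕ))).obj E) (ge_truncLT t _ a E ha)
      (t.isLE_truncLT_obj E (a - 1 + (N + 1 : ℕ)) (a - 1 + N) (by push_cast; lia))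
    obtain ⟨n, hn⟩ := hl X.obj ((hH _).2 X.property)
    exact ⟨_, hf.add hT (Bd.shift_heart (L.of_hasLengthIn hH hn) _)⟩

lemma tComplexity_lt_top (hl : ∀ X ∈ H, ∃ n, HasLengthIn D H X n) (s : ℝ) (E : D) :
    tComplexity D H s E < ∞ := by
  obtain ⟨f, hf⟩ := exists_bd hH hb hl E
  exact (tComplexity_le hH hb s hf).trans_lt ENNReal.ofReal_lt_top

/-- An object without cohomology is zero. -/
lemma isZero_of_bd {E : D} (h : Bd t E 0) : IsZero E := by
  obtain ⟨a, N, ha, hN⟩ := exists_amplitude hb E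
  obtain ⟨m, k, X, lam, -, -, hX, hlam, hF, hs⟩ := h.exists_filtration hH 0 a N ha hN
  refine filtration_sum (M := Unit) (fun E _ => IsZero E) (fun X h => h)
    (fun X Y _ e h => h.of_iso e.symm) (fun X Y Z _ _ hT h h' => ?_) hF (fun _ => ()) fun i => ?_
  · obtain ⟨e⟩ := hT.iso_of_isZero_left h
    exact h'.of_iso e
  · refine (shiftFunctor D (k i)).map_isZero ?_
    have h0 : lam i = 0 := by
      have h1 := (Finset.single_le_sum (f := fun i => (lam i : ℝ) * Real.exp ((k i : ℝ) * 0))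
        (fun i _ => by positivity) (Finset.mem_univ i)).trans hs
      simp only [mul_zero, Real.exp_zero, mul_one, map_zero] at h1
      exact_mod_cast le_antisymm h1 (Nat.cast_nonneg _)
    have hi := L.of_hasLengthIn (X := ⟨X i, (hH _).1 (hX i)⟩) hH (hlam i)
    rw [h0] at hi
    cases hi with
    | zero _ h => exact (isZero_heart_iff _).1 h

lemma tComplexity_ne_zero (s : ℝ) {E : D} (hE : ¬ IsZero E) : tComplexity D H s E ≠ 0 := by
  have : ∃ n, ¬ RL t n E 0 := by
    by_contra! h
    exact hE (isZero_of_bd hH hb h)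
  obtain ⟨n, hn⟩ := this
  have hpos : 0 < ENNReal.ofReal (Real.exp (-n * s)) := by simp [Real.exp_pos]
  refine (hpos.trans_le ?_).ne'
  rw [tComplexity_eq hH hb]
  refine le_sInf ?_
  rintro _ ⟨f, hf, rfl⟩
  refine ENNReal.ofReal_le_ofReal ((?_ : _ ≤ _).trans (wt_le s f n))
  have h1 : f n ≠ 0 := fun h => hn (h ▸ hf n)
  have h2 : (1 : ℝ) ≤ f n := by exact_mod_cast Nat.one_le_iff_ne_zero.2 h1
  exact le_mul_of_one_le_left (Real.exp_pos _).le h2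

omit hH hb in
/-- The complexity with respect to a split-generator is controlled by the complexity of a
t-structure whose heart is finite. -/
lemma complexity_le_tComplexity {G : D} (hG : IsSplitGenerator D G) (hfin : FiniteHeart D H)
    (s : ℝ) : ∃ C : ℝ≥0∞, C ≠ 0 ∧ C ≠ ∞ ∧
      ∀ E, complexity D s G E ≤ C * tComplexity D H s E := by
  obtain ⟨-, n, S, hS, -, hiso⟩ := hfin
  let C : ℝ≥0∞ := ∑ j, complexity D s G (S j) + 1
  have hC0 : C ≠ 0 := by simp [C]
  have hC : C ≠ ∞ := by
    simp only [C, ne_eq, ENNReal.add_eq_top, ENNReal.sum_eq_top, ENNReal.one_ne_top, or_false,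
      not_exists, not_and]
    exact fun j _ => (complexity_lt_top hG (S j)).ne
  have hsum : ∀ {m : ℕ} {X : Fin m → D} {F : D} (c : Fin m → ℝ≥0∞),
      HasFiltrationIn D Set.univ F X → (∀ i, complexity D s G (X i) ≤ c i) →
      complexity D s G F ≤ ∑ i, c i := fun c hF hc =>
    filtration_sum (fun E c => complexity D s G E ≤ c) (fun X hX => (complexity_zero hX).le)
      (fun X Y m e h => (complexity_retract ⟨e.inv, e.hom, by simp⟩).trans h)
      (fun X Y Z a b hT ha hb => (complexity_tri hT).trans (add_le_add ha hb)) hF c hc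
  have hsimple : ∀ X, SimpleIn D H X → complexity D s G X ≤ C := by
    intro X hX
    obtain ⟨j, ⟨e⟩⟩ := hiso X hX
    refine (complexity_retract ⟨e.hom, e.inv, by simp⟩).trans ?_
    refine (Finset.single_le_sum (f := fun j => complexity D s G (S j)) (fun _ _ => zero_le)
      (Finset.mem_univ j)).trans ?_
    exact le_self_add
  refine ⟨C, hC0, hC, fun E => ?_⟩
  rw [mul_comm, ← ENNReal.div_le_iff hC0 hC]
  refine le_sInf ?_
  rintro _ ⟨m, k, X, lam, -, hX, hlam, hF, rfl⟩
  rw [ENNReal.div_le_iff hC0 hC]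
  refine (hsum (fun i => ENNReal.ofReal (Real.exp (k i * s)) * (lam i * C)) hF
    fun i => ?_).trans ?_
  · refine (complexity_shift _ _).trans ?_
    gcongr
    obtain ⟨S', hS', hF'⟩ := hlam i
    refine (hsum (fun _ => C) hF' fun j => hsimple _ (hS' j)).trans ?_
    simp
  · rw [ENNReal.ofReal_sum_of_nonneg fun i _ => by positivity, Finset.sum_mul]
    refine le_of_eq (Finset.sum_congr rfl fun i _ => ?_)
    rw [ENNReal.ofReal_mul (Nat.cast_nonneg _), ENNReal.ofReal_natCast]
    ring

end TComplexity

/-! ### Growth rates of submultiplicative sequences -/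

section Sequences

/-- Fekete's lemma without a lower bound: the limit may be `-∞`. -/
lemma fekete_ereal {u : ℕ → ℝ} (h : Subadditive u) :
    ∃ L : EReal, Tendsto (fun n : ℕ => ((u n / n : ℝ) : EReal)) atTop (nhds L) := by
  refine ⟨⨅ n : {n : ℕ // n ≠ 0}, ((u n / n : ℝ) : EReal), tendsto_order.2 ⟨fun l hl => ?_,
    fun l hl => ?_⟩⟩
  · filter_upwards [eventually_ne_atTop 0] with n hn
    exact hl.trans_le (iInf_le (fun n : {n : ℕ // n ≠ 0} => ((u n / n : ℝ) : EReal)) ⟨n, hn⟩)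
  · obtain ⟨⟨n, hn⟩, hnl⟩ := iInf_lt_iff.1 hl
    obtain ⟨r, h1, h2⟩ := EReal.lt_iff_exists_real_btwn.1 hnl
    filter_upwards [h.eventually_div_lt_of_div_lt hn (EReal.coe_lt_coe_iff.1 h1)] with p hp
    exact (EReal.coe_lt_coe_iff.2 hp).trans h2

lemma entSeq_mono {a b : ℕ → ℝ≥0∞} (h : ∀ N, a N ≤ b N) (N : ℕ) : entSeq a N ≤ entSeq b N := by
  unfold entSeq
  exact mul_le_mul_of_nonneg_left (ENNReal.log_monotone (h N)) (by positivity)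

/-- Multiplicative constants do not affect exponential growth rates. -/
lemma tendsto_entSeq_const_mul {a : ℕ → ℝ≥0∞} {C : ℝ≥0∞} (h0 : C ≠ 0) (h1 : C ≠ ∞) {L : EReal}
    (h : Tendsto (entSeq a) atTop (nhds L)) :
    Tendsto (entSeq fun N => C * a N) atTop (nhds L) := by
  have h2 : Tendsto (fun N : ℕ => (((N : ℝ)⁻¹ * Real.log C.toReal : ℝ) : EReal)) atTop
      (nhds ((0 : ℝ) : EReal)) := by
    refine (continuous_coe_real_ereal.tendsto _).comp ?_
    simpa using (tendsto_inv_atTop_nhds_zero_nat (𝕜 := ℝ)).mul_const (Real.log C.toReal)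
  have h3 := (EReal.continuousAt_add (p := (((0 : ℝ) : EReal), L)) (Or.inl (EReal.coe_ne_top _))
    (Or.inl (EReal.coe_ne_bot _))).tendsto.comp (h2.prodMk_nhds h)
  simp only [EReal.coe_zero, zero_add] at h3
  refine h3.congr fun N => ?_
  simp only [Function.comp, entSeq, ENNReal.log_mul_add, ENNReal.log_pos_real h0 h1, EReal.coe_mul]
  exact (EReal.left_distrib_of_nonneg_of_ne_top (EReal.coe_nonneg.2 (by positivity))
    (EReal.coe_ne_top _) _ _).symm

lemma exists_tendsto_entSeq {a : ℕ → ℝ≥0∞} {C : ℝ≥0∞} (hC0 : C ≠ 0) (hC1 : C ≠ ∞)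
    (h0 : ∀ N, a N ≠ 0) (h1 : ∀ N, a N ≠ ∞) (h : ∀ M N, a (M + N) ≤ C * a M * a N) :
    ∃ L, Tendsto (entSeq a) atTop (nhds L) := by
  have hb0 : ∀ N, C * a N ≠ 0 := fun N => mul_ne_zero hC0 (h0 N)
  have hb1 : ∀ N, C * a N ≠ ∞ := fun N => ENNReal.mul_ne_top hC1 (h1 N)
  have hu : Subadditive fun N => Real.log (C * a N).toReal := by
    intro M N
    rw [← Real.log_mul (ENNReal.toReal_ne_zero.2 ⟨hb0 M, hb1 M⟩)
      (ENNReal.toReal_ne_zero.2 ⟨hb0 N, hb1 N⟩), ← ENNReal.toReal_mul]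
    refine Real.log_le_log (ENNReal.toReal_pos (hb0 _) (hb1 _)) ?_
    refine ENNReal.toReal_mono (ENNReal.mul_ne_top (hb1 _) (hb1 _)) ?_
    calc C * a (M + N) ≤ C * (C * a M * a N) := by gcongr; exact h M N
      _ = _ := by ring
  obtain ⟨L, hL⟩ := fekete_ereal hu
  refine ⟨L, ?_⟩
  have h2 : Tendsto (entSeq fun N => C * a N) atTop (nhds L) := by
    refine hL.congr fun N => ?_
    rw [entSeq, ENNReal.log_pos_real (hb0 N) (hb1 N), ← EReal.coe_mul, div_eq_inv_mul]
  refine (tendsto_entSeq_const_mul (ENNReal.inv_ne_zero.2 hC1) (ENNReal.inv_ne_top.2 hC0) h2).congr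
    fun N => ?_
  simp only [entSeq, ← mul_assoc, ENNReal.inv_mul_cancel hC0 hC1, one_mul]

end Sequences

/-! ### Iterates of an exact endofunctor and entropy -/

section Iterates

variable {D : Type u} [Category.{v} D]

lemma iter_add_obj (Φ : D ⥤ D) (M N : ℕ) (X : D) :
    (iter Φ (M + N)).obj X = (iter Φ N).obj ((iter Φ M).obj X) := by
  induction N with
  | zero => rfl
  | succ N ih => exact congrArg Φ.obj ih

variable [Preadditive D] [HasZeroObject D]
  [HasShift D ℤ] [∀ n : ℤ, (shiftFunctor D n).Additive] [Pretriangulated D]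

lemma iter_tri (Φ : D ⥤ D) [Φ.CommShift ℤ] [Φ.IsTriangulated] (N : ℕ) {X Y Z : D}
    (h : Tri X Y Z) : Tri ((iter Φ N).obj X) ((iter Φ N).obj Y) ((iter Φ N).obj Z) := by
  induction N with
  | zero => exact h
  | succ N ih =>
    obtain ⟨f, g, d, H⟩ := ih
    exact ⟨_, _, _, Φ.map_distinguished _ H⟩

omit [HasZeroObject D] [∀ n : ℤ, (shiftFunctor D n).Additive] [Pretriangulated D] in
lemma iter_shift (Φ : D ⥤ D) [Φ.CommShift ℤ] (N : ℕ) (X : D) (k : ℤ) :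
    Nonempty ((iter Φ N).obj (X⟦k⟧) ≅ ((iter Φ N).obj X)⟦k⟧) := by
  induction N with
  | zero => exact ⟨Iso.refl _⟩
  | succ N ih =>
    obtain ⟨e⟩ := ih
    exact ⟨Φ.mapIso e ≪≫ (Φ.commShiftIso k).app _⟩

lemma iter_isZero (Φ : D ⥤ D) [Φ.CommShift ℤ] [Φ.IsTriangulated] (N : ℕ) {X : D}
    (h : IsZero X) : IsZero ((iter Φ N).obj X) := by
  induction N with
  | zero => exact h
  | succ N ih => exact Φ.map_isZero ih

variable [HasFiniteBiproducts D] {t : Triangulated.TStructure D} {H : Set D}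
  (hH : ∀ X, X ∈ H ↔ t.heart X)
  (hb : ∀ X, (∃ b, t.IsLE X b) ∧ ∃ a, t.IsGE X a)
include hH hb

/-- An exact functor applied to a filtration of `E` by shifts of `G` yields a filtration of the
image of `E` by shifts of the image of `G`, along which the invariant is subadditive. -/
lemma tComplexity_iter_le (Φ : D ⥤ D) [Φ.CommShift ℤ] [Φ.IsTriangulated] (N : ℕ) (s : ℝ)
    (G E : D) (h0 : tComplexity D H s ((iter Φ N).obj G) ≠ 0)
    (h1 : tComplexity D H s ((iter Φ N).obj G) ≠ ∞) :
    tComplexity D H s ((iter Φ N).obj E) ≤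
      complexity D s G E * tComplexity D H s ((iter Φ N).obj G) := by
  rw [← ENNReal.div_le_iff h0 h1, complexity_eq]
  refine le_sInf ?_
  rintro _ ⟨c, ⟨M, hM, ⟨ρ⟩⟩, rfl⟩
  rw [ENNReal.div_le_iff h0 h1]
  refine (tComplexity_retract hH hb s (ρ.map (iter Φ N))).trans ?_
  clear ρ
  induction hM with
  | zero M hM => simp [tComplexity_zero hH hb s (iter_isZero Φ N hM)]
  | step c A B k h hT ih =>
    obtain ⟨e⟩ := iter_shift Φ N G k
    rw [ENNReal.ofReal_add h.nonneg (Real.exp_pos _).le, add_mul]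
    exact (tComplexity_tri hH hb s
      ((iter_tri Φ N hT).of_iso (Iso.refl _) (Iso.refl _) e)).trans
        (add_le_add ih (tComplexity_shift hH hb s _ k))

end Iterates

section Main

variable {D : Type u} [Category.{v} D] [Preadditive D] [HasZeroObject D]
  [HasShift D ℤ] [∀ n : ℤ, (shiftFunctor D n).Additive] [Pretriangulated D]
  [HasFiniteBiproducts D]

/-- The objects annihilated by an exact functor form a thick subcategory. -/
lemma iter_isZero_of_generator (Φ : D ⥤ D) [Φ.CommShift ℤ]
    [Φ.IsTriangulated] (N : ℕ) {G : D} (hG : IsSplitGenerator D G)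
    (h : IsZero ((iter Φ N).obj G)) (E : D) : IsZero ((iter Φ N).obj E) := by
  obtain ⟨m, k, F', -, hF⟩ := hG.2 E trivial
  have hZ : IsZero ((iter Φ N).obj (E ⊞ F')) := by
    refine filtration_sum (M := Unit) (fun E _ => IsZero ((iter Φ N).obj E))
      (fun X hX => iter_isZero Φ N hX) (fun X Y _ e hX => hX.of_iso ((iter Φ N).mapIso e.symm))
      (fun X Y Z _ _ hT hX hZ => ?_) hF (fun _ => ()) fun i => ?_
    · obtain ⟨e⟩ := (iter_tri Φ N hT).iso_of_isZero_left hX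
      exact hZ.of_iso e
    · obtain ⟨e⟩ := iter_shift Φ N G (k i)
      exact ((shiftFunctor D (k i)).map_isZero h).of_iso e
  have ρ : Retract E (E ⊞ F') := ⟨biprod.inl, biprod.fst, by simp⟩
  have ρ' := ρ.map (iter Φ N)
  rw [IsZero.iff_id_eq_zero, ← ρ'.retract, hZ.eq_of_tgt ρ'.i 0, zero_comp]

/-- The sequence `δ̂_t(Φ^N G)` is submultiplicative up to a constant, so it has a growth rate, and
the sequences `δ_t(G, Φ^N G)` and `δ̂_t(Φ^N E)` are compared with it. -/
lemma main (le ge : Set D) (ht : IsTStructureIn D Set.univ le ge)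
    (hbd : IsBoundedIn D Set.univ le ge) (hfin : FiniteHeart D (heart D le ge))
    (Φ : D ⥤ D) [Φ.CommShift ℤ] [Φ.IsTriangulated] (hΦ : PowersNonzeroOn D Set.univ Φ)
    (G : D) (hG : IsSplitGenerator D G) (t : ℝ) :
    ∃ L : EReal,
      Tendsto (entSeq (fun N => tComplexity D (heart D le ge) t ((iter Φ N).obj G)))
        atTop (nhds L) ∧
      entropy D Φ G t = L ∧ tEntropyIn D Set.univ (heart D le ge) Φ t = L := by
  have hH := mem_heart_mkT ht
  have hb := bounded_mkT ht hbd
  obtain ⟨C, hC0, hC1, hC⟩ := complexity_le_tComplexity hG hfin t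
  have hnz : ∀ N, ¬ IsZero ((iter Φ N).obj G) := by
    intro N hN
    obtain ⟨X, -, hX⟩ := hΦ (N + 1) N.succ_pos
    exact hX (Φ.map_isZero (iter_isZero_of_generator Φ N hG hN X))
  set T := tComplexity D (heart D le ge) t with hT
  have h0 : ∀ N, T ((iter Φ N).obj G) ≠ 0 := fun N => tComplexity_ne_zero hH hb t (hnz N)
  have h1 : ∀ E, T E ≠ ∞ := fun E => (tComplexity_lt_top hH hb hfin.1 t E).ne
  have key : ∀ N E, T ((iter Φ N).obj E) ≤ complexity D t G E * T ((iter Φ N).obj G) :=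
    fun N E => tComplexity_iter_le hH hb Φ N t G E (h0 N) (h1 _)
  obtain ⟨L, hL⟩ := exists_tendsto_entSeq (a := fun N => T ((iter Φ N).obj G)) hC0 hC1 h0
    (fun N => h1 _) (fun M N => by
      rw [iter_add_obj]
      refine (key N _).trans ?_
      gcongr
      exact hC _)
  refine ⟨L, hL, ?_, le_antisymm (iSup_le fun E => ?_) ?_⟩
  · have hlow := tendsto_entSeq_const_mul (ENNReal.inv_ne_zero.2 (h1 G))
      (ENNReal.inv_ne_top.2 (h0 0)) hL
    refine (tendsto_of_tendsto_of_tendsto_of_le_of_le hlow (tendsto_entSeq_const_mul hC0 hC1 hL)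
      (entSeq_mono fun N => ?_) (entSeq_mono fun N => hC _)).limsup_eq
    rw [mul_comm, ← div_eq_mul_inv]
    exact (ENNReal.div_le_iff (h0 0) (h1 G)).2 (key 0 _)
  · -- The constant `δ_t(G, E)` may vanish, so it is enlarged by `1`.
    have hlim := tendsto_entSeq_const_mul (C := complexity D t G E.1 + 1) (by simp)
      (by simpa using (complexity_lt_top hG E.1).ne) hL
    refine (limsup_le_limsup (Eventually.of_forall (entSeq_mono fun N => ?_))).trans
      hlim.limsup_eq.le
    exact (key N E.1).trans (by gcongr; exact le_self_add)
  · rw [← hL.limsup_eq]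
    exact le_iSup (fun E : {X : D // X ∈ Set.univ} => limsup
      (entSeq (fun N => T ((iter Φ N).obj E.1))) atTop) ⟨G, trivial⟩

end Main

end EntropyProof

/-- for a bounded t-structure `𝔞 = (le, ge)` with finite heart on a
`K`-linear idempotent complete triangulated category `D` with a split-generator, and
an exact endofunctor `Φ` with `Φ^N ≇ 0` for all `N > 0`, for every `t` and every
split-generator `G` the limit `lim_N (1/N) log δ̂_t^𝔞(Φ^N G)` exists and
`h_t(Φ) = ĥ_t^𝔞(Φ) = lim_N (1/N) log δ̂_t^𝔞(Φ^N G)`; in particular `ĥ_t^𝔞(Φ)`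
does not depend on the choice of `𝔞`. -/
theorem entropy_eq_tEntropy
    (K : Type w) [Field K]
    (D : Type u) [Category.{v} D] [Preadditive D] [CategoryTheory.Linear K D]
    [HasZeroObject D] [HasShift D ℤ] [∀ n : ℤ, (shiftFunctor D n).Additive]
    [Pretriangulated D] [HasFiniteBiproducts D] [IsIdempotentComplete D]
    (le ge : Set D)
    (ht : IsTStructureIn D Set.univ le ge)
    (hbd : IsBoundedIn D Set.univ le ge)
    (hfin : FiniteHeart D (heart D le ge))
    (Φ : D ⥤ D) [Φ.CommShift ℤ] [Φ.IsTriangulated]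
    (hΦ : PowersNonzeroOn D Set.univ Φ)
    (G : D) (hG : IsSplitGenerator D G) (t : ℝ) :
    ∃ L : EReal,
      Filter.Tendsto
        (entSeq (fun N => tComplexity D (heart D le ge) t ((iter Φ N).obj G)))
        Filter.atTop (nhds L) ∧
      entropy D Φ G t = L ∧
      tEntropyIn D Set.univ (heart D le ge) Φ t = L := by
  exact EntropyProof.main le ge ht hbd hfin Φ hΦ G hG t
end

section
/- Let K be a field, D a K-linear idempotent complete triangulated category with a split-generator, 𝔞 a bounded t-structure on D with finite heart H, Φ : D → D an exact endofunctor with Φ^N ≇ 0 for all N > 0, and Γ : D → D^b(K) an exact functor to the bounded derived category of K-vector spaces. Then (i) for every object E ∈ D and every t ∈ ℝ, ĥ_t^𝔞(Φ) ≥ limsup_{N→∞} (1/N) log ∑_{k ∈ ℤ} dim H^{-k}(Γ(Φ^N(E))) e^{kt}; and (ii) if moreover Γ(E) ≅ K (concentrated in degree 0) for every simple object E of H, then for any split-generator G of D the limit exists and ĥ_t^𝔞(Φ) = lim_{N→∞} (1/N) log ∑_{k ∈ ℤ} dim H^{-k}(Γ(Φ^N(G))) e^{kt}. The analogous statements hold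 for an exact functor Γ : D^op → D^b(K) with e^{kt} replaced by e^{-kt}. -/
/-!
Call a function `W : D → [0, ∞]` a `t`-weight if it is monotone under retracts, subadditive along
exact triangles and multiplied by at most `e^{nt}` under the shift by `n`. Evaluating a finite
weight along a t-filtration and along composition series of its factors gives `W ≤ M · δ̂_t`, where
`M` is governed by the finitely many simple objects of the heart (`IsWeight.le_tComplexity`). By
the long exact sequence of cohomology, `X ↦ ∑_k dim H^{-k}(Γ X) e^{kt}` is a finite weight, and
(i) follows by passing to growth rates.

For (ii), `Γ(S) ≅ K` for all simple `S` makes the dimensions add up along composition series in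
the heart, which therefore go to complexes concentrated in degree `0`, and then along
t-filtrations, whose factors sit in distinct degrees. So the dimension sum is the value
`∑ λ(E_i) e^{k_i t}` of any t-filtration, and bounds `δ̂_t` (`IsDimFamily.tComplexity_le`);
t-filtrations exist because the t-structure is bounded and an object can be truncated one degree
at a time (`exists_tFiltration`).

It remains to compare with a split-generator `G`. Let `g` be the largest weight with `g(G) ≤ 1`
(`genWeight`). It is finite, as `G` generates, and every finite weight satisfies
`W ≤ W(G) · g`. Applied to `W = g ∘ Φ^M`, this shows that `N ↦ g(Φ^N G)` is submultiplicative, so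
its growth rate is a limit by Fekete's lemma. If the finite weight `W` dominates `δ̂_t`, then
`g ≤ M · δ̂_t ≤ M · W ≤ M · W(G) · g`, so `W(Φ^N G)` grows at the same rate, and
`δ̂_t(Φ^N E) ≤ W(G) · g(Φ^N G) · g(E)` shows that no object `E` grows faster
(`IsWeight.exists_tendsto`).

The contravariant case is the same with `dim H^k` in place of `dim H^{-k}`; `IsDimFamily` records
the properties common to both.
-/

/- Common definitions: filtrations, categorical complexity and entropy,
(co-)t-structures, hearts/co-hearts, and associated entropy-type invariants. -/

open CategoryTheory CategoryTheory.Limits CategoryTheory.Pretriangulated Filter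
open scoped ENNReal

universe w v u

namespace CatEnt

/-- A model for the bounded derived category `D^b(K)` of `K`-vector spaces:
the homotopy category of cochain complexes of `K`-modules (over a field, every
complex of vector spaces is homotopy equivalent to its cohomology), in which we
single out the objects with bounded finite-dimensional cohomology. -/
abbrev Db (K : Type) [Field K] :=
  HomotopyCategory (ModuleCat.{0} K) (ComplexShape.up ℤ)

/-- The dimension of the `k`-th cohomology of an object of `D^b(K)`. -/
noncomputable def cohomDim (K : Type) [Field K] (V : Db K) (k : ℤ) : ℕ :=
  Module.finrank K
    ((HomotopyCategory.homologyFunctor (ModuleCat.{0} K) (ComplexShape.up ℤ) k).obj V)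

/-- `V` lies in `D^b(K)`: it has bounded, finite-dimensional cohomology. -/
def MemDb (K : Type) [Field K] (V : Db K) : Prop :=
  {k : ℤ | ¬ CategoryTheory.Limits.IsZero
      ((HomotopyCategory.homologyFunctor (ModuleCat.{0} K) (ComplexShape.up ℤ) k).obj V)}.Finite ∧
  ∀ k : ℤ, Module.Finite K
    ((HomotopyCategory.homologyFunctor (ModuleCat.{0} K) (ComplexShape.up ℤ) k).obj V)

/-- The object `K` of `D^b(K)`, concentrated in degree `0`. -/
noncomputable def unitDb (K : Type) [Field K] : Db K :=
  (HomotopyCategory.quotient (ModuleCat.{0} K) (ComplexShape.up ℤ)).obj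
    ((HomologicalComplex.single (ModuleCat.{0} K) (ComplexShape.up ℤ) 0).obj
      (ModuleCat.of K K))

/-- The weighted dimension sum `∑_{k ∈ ℤ} dim H^{-k}(V) e^{k t}`. -/
noncomputable def dimSumNeg (K : Type) [Field K] (V : Db K) (t : ℝ) : ℝ≥0∞ :=
  ∑' k : ℤ, (cohomDim K V (-k) : ℝ≥0∞) * ENNReal.ofReal (Real.exp ((k : ℝ) * t))

end CatEnt

open CatEnt CategoryTheory.Pretriangulated.Opposite

/-! ### Filtrations and weights -/

namespace CatEnt

section Weights

set_option linter.unusedSectionVars false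

variable {D : Type u} [Category.{v} D] [Preadditive D] [HasZeroObject D]
  [HasShift D ℤ] [∀ n : ℤ, (shiftFunctor D n).Additive] [Pretriangulated D]
  [HasFiniteBiproducts D]

/-- There is an exact triangle `X → Y → Z → X⟦1⟧`. -/
def IsTri (X Y Z : D) : Prop :=
  ∃ (f : X ⟶ Y) (g : Y ⟶ Z) (δ : Z ⟶ X⟦(1 : ℤ)⟧), Triangle.mk f g δ ∈ distTriang D

lemma IsTri.of_iso {X Y Z X' Y' Z' : D} (h : IsTri X Y Z) (e₁ : X ≅ X') (e₂ : Y ≅ Y')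
    (e₃ : Z ≅ Z') : IsTri X' Y' Z' := by
  obtain ⟨f, g, δ, hT⟩ := h
  refine ⟨e₁.inv ≫ f ≫ e₂.hom, e₂.inv ≫ g ≫ e₃.hom,
    e₃.inv ≫ δ ≫ (shiftFunctor D (1 : ℤ)).map e₁.hom, isomorphic_distinguished _ hT _ ?_⟩
  refine Triangle.isoMk _ _ e₁.symm e₂.symm e₃.symm ?_ ?_ ?_
  · change (e₁.inv ≫ f ≫ e₂.hom) ≫ e₂.inv = e₁.inv ≫ f
    simp
  · change (e₂.inv ≫ g ≫ e₃.hom) ≫ e₃.inv = e₂.inv ≫ g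
    simp
  · change (e₃.inv ≫ δ ≫ (shiftFunctor D (1 : ℤ)).map e₁.hom) ≫
      (shiftFunctor D (1 : ℤ)).map e₁.inv = e₃.inv ≫ δ
    simp [← Functor.map_comp]

lemma filtration_zero {F : D} {X : Fin 0 → D} :
    HasFiltrationIn D Set.univ F X ↔ IsZero F := by
  constructor
  · rintro ⟨A, h0, ⟨e⟩, -, -⟩
    exact h0.of_iso e.symm
  · intro h
    exact ⟨fun _ => F, h, ⟨Iso.refl _⟩, fun _ => trivial, fun i => i.elim0⟩

/-- Peeling off the last factor of a filtration. -/
lemma filtration_succ {F : D} {m : ℕ} {X : Fin (m + 1) → D}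
    (h : HasFiltrationIn D Set.univ F X) :
    ∃ F' : D, HasFiltrationIn D Set.univ F' (fun i : Fin m => X i.castSucc) ∧
      IsTri F' F (X (Fin.last m)) := by
  obtain ⟨A, h0, ⟨e⟩, -, hA⟩ := h
  refine ⟨A (Fin.last m).castSucc, ⟨fun i => A i.castSucc, h0, ⟨Iso.refl _⟩,
    fun _ => trivial, fun i => hA i.castSucc⟩, ?_⟩
  exact IsTri.of_iso (hA (Fin.last m)) (Iso.refl _) e (Iso.refl _)

/-- Extending a filtration by one more factor on top. -/
lemma filtration_snoc {F F' Z : D} {m : ℕ} {X : Fin m → D}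
    (h : HasFiltrationIn D Set.univ F' X) (hT : IsTri F' F Z) :
    HasFiltrationIn D Set.univ F (Fin.snoc X Z : Fin (m + 1) → D) := by
  obtain ⟨A, h0, ⟨e⟩, -, hA⟩ := h
  refine ⟨(Fin.snoc A F : Fin (m + 2) → D), ?_, ⟨eqToIso (Fin.snoc_last ..)⟩,
    fun _ => trivial, fun i => ?_⟩
  · have : (Fin.snoc A F : Fin (m + 2) → D) 0 = A 0 :=
      Fin.snoc_castSucc (α := fun _ => D) F A 0
    rwa [this]
  · induction i using Fin.lastCases with
    | last =>
      rw [Fin.succ_last, Fin.snoc_last, Fin.snoc_last, Fin.snoc_castSucc]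
      exact hT.of_iso e.symm (Iso.refl _) (Iso.refl _)
    | cast i =>
      rw [Fin.succ_castSucc, Fin.snoc_castSucc, Fin.snoc_castSucc, Fin.snoc_castSucc]
      exact hA i

/-- A `t`-weight on `D`: an `ℝ≥0∞`-valued size of objects which is monotone under retracts,
subadditive along exact triangles, and scales by at most `exp (n * t)` under the shift by `n`. -/
structure IsWeight (t : ℝ) (W : D → ℝ≥0∞) : Prop where
  retract : ∀ {X Y : D}, Retract X Y → W X ≤ W Y
  zero : ∀ {X : D}, IsZero X → W X = 0
  tri : ∀ {X Y Z : D}, IsTri X Y Z → W Y ≤ W X + W Z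
  shift : ∀ (X : D) (n : ℤ), W (X⟦n⟧) ≤ ENNReal.ofReal (Real.exp (n * t)) * W X

namespace IsWeight

variable {t : ℝ} {W : D → ℝ≥0∞}

lemma iso_eq (hW : IsWeight t W) {X Y : D} (e : X ≅ Y) : W X = W Y :=
  le_antisymm (hW.retract (Retract.ofIso e)) (hW.retract (Retract.ofIso e.symm))

lemma le_filtration (hW : IsWeight t W) {m : ℕ} : ∀ {F : D} {X : Fin m → D},
    HasFiltrationIn D Set.univ F X → W F ≤ ∑ i, W (X i) := by
  induction m with
  | zero => intro F X h; simp [hW.zero (filtration_zero.1 h)]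
  | succ m ih =>
    intro F X h
    obtain ⟨F', hF', hT⟩ := filtration_succ h
    rw [Fin.sum_univ_castSucc]
    exact (hW.tri hT).trans (add_le_add_left (ih hF') _)

lemma comp (hW : IsWeight t W) (Φ : D ⥤ D) [Φ.CommShift ℤ] [Φ.IsTriangulated] :
    IsWeight t (fun X => W (Φ.obj X)) where
  retract h := hW.retract (h.map Φ)
  zero h := hW.zero (Φ.map_isZero h)
  tri := fun ⟨_, _, _, hT⟩ => hW.tri ⟨_, _, _, Φ.map_distinguished _ hT⟩
  shift X n := (hW.iso_eq ((Φ.commShiftIso n).app X)).le.trans (hW.shift _ n)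

lemma comp_iter (hW : IsWeight t W) (Φ : D ⥤ D) [Φ.CommShift ℤ] [Φ.IsTriangulated] (N : ℕ) :
    IsWeight t (fun X => W ((iter Φ N).obj X)) := by
  induction N generalizing W with
  | zero => exact hW
  | succ N ih => exact ih (hW.comp Φ)

lemma const_mul (hW : IsWeight t W) (c : ℝ≥0∞) : IsWeight t (fun X => c * W X) where
  retract h := by gcongr; exact hW.retract h
  zero h := by simp [hW.zero h]
  tri hT := by rw [← mul_add]; gcongr; exact hW.tri hT
  shift X n := by rw [mul_left_comm]; gcongr; exact hW.shift X n

/-- A finite weight is bounded, up to a constant, by the invariant `δ̂_t` of any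
t-structure with finite heart: take for the constant the total weight of the simple objects. -/
lemma le_tComplexity (hW : IsWeight t W) (hfin : ∀ X, W X ≠ ⊤) {H : Set D}
    (hH : FiniteHeart D H) :
    ∃ M : ℝ≥0∞, M ≠ ⊤ ∧ ∀ X, W X ≤ M * tComplexity D H t X := by
  obtain ⟨-, n, S, -, -, hS⟩ := hH
  have hM : ∑ i, W (S i) ≠ ⊤ := by simp [ENNReal.sum_eq_top, hfin]
  refine ⟨∑ i, W (S i) + 1, by simp [hM], fun X => ?_⟩
  have hs : ∀ T, SimpleIn D H T → W T ≤ ∑ i, W (S i) + 1 := by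
    intro T hT
    obtain ⟨i, ⟨e⟩⟩ := hS T hT
    rw [hW.iso_eq e]
    exact (Finset.single_le_sum (f := fun i => W (S i)) (fun _ _ => zero_le) (Finset.mem_univ i)).trans le_self_add
  rw [← ENNReal.div_le_iff' (by simp) (by simp [hM])]
  refine le_sInf ?_
  rintro c ⟨m, k, Y, lam, -, -, hlam, hfil, rfl⟩
  rw [ENNReal.div_le_iff' (by simp) (by simp [hM])]
  refine (hW.le_filtration hfil).trans ?_
  rw [ENNReal.ofReal_sum_of_nonneg (fun i _ => by positivity), Finset.mul_sum]
  refine Finset.sum_le_sum fun i _ => ?_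
  obtain ⟨T, hT, hTf⟩ := hlam i
  calc W ((Y i)⟦k i⟧) ≤ ENNReal.ofReal (Real.exp (k i * t)) * W (Y i) := hW.shift _ _
    _ ≤ ENNReal.ofReal (Real.exp (k i * t)) * (lam i * (∑ i, W (S i) + 1)) := by
        gcongr
        refine (hW.le_filtration hTf).trans
          ((Finset.sum_le_sum fun j _ => hs (T j) (hT j)).trans ?_)
        simp [mul_add]
    _ = _ := by
        rw [ENNReal.ofReal_mul (by positivity), ENNReal.ofReal_natCast]
        ring

end IsWeight

/-- The largest `t`-weight taking a value at most `1` at `G`. It plays the role of the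
categorical complexity `δ_t(G, -)`, but its subadditivity along triangles and its
submultiplicativity hold without passing through compositions of triangles. -/
noncomputable def genWeight (t : ℝ) (G : D) (X : D) : ℝ≥0∞ :=
  ⨆ W : {W : D → ℝ≥0∞ // IsWeight t W ∧ W G ≤ 1}, W.1 X

lemma genWeight_isWeight (t : ℝ) (G : D) : IsWeight t (genWeight t G) where
  retract h := iSup_mono fun W => W.2.1.retract h
  zero h := by simp only [genWeight, ENNReal.iSup_eq_zero]; exact fun W => W.2.1.zero h
  tri hT := iSup_le fun W => (W.2.1.tri hT).trans
    (add_le_add (le_iSup (fun W : {W : D → ℝ≥0∞ // IsWeight t W ∧ W G ≤ 1} => W.1 _) W)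
      (le_iSup (fun W : {W : D → ℝ≥0∞ // IsWeight t W ∧ W G ≤ 1} => W.1 _) W))
  shift X n := iSup_le fun W => (W.2.1.shift X n).trans (by
    gcongr
    exact le_iSup (fun W : {W : D → ℝ≥0∞ // IsWeight t W ∧ W G ≤ 1} => W.1 _) W)

lemma genWeight_self_le (t : ℝ) (G : D) : genWeight t G G ≤ 1 := iSup_le fun W => W.2.2

/-- Finiteness comes from a filtration of `X ⊞ F'` by shifts of the split-generator. -/
lemma genWeight_ne_top (t : ℝ) {G : D} (hG : IsSplitGenerator D G) (X : D) :
    genWeight t G X ≠ ⊤ := by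
  obtain ⟨m, k, F', -, hfil⟩ := hG.2 X trivial
  have hw := genWeight_isWeight t G
  have h1 : genWeight t G X ≤ ∑ i : Fin m, ENNReal.ofReal (Real.exp (k i * t)) := by
    refine (hw.retract (⟨biprod.inl, biprod.fst, by simp⟩ : Retract X (X ⊞ F'))).trans
      ((hw.le_filtration hfil).trans (Finset.sum_le_sum fun i _ => ?_))
    refine (hw.shift G (k i)).trans ?_
    exact mul_le_of_le_one_right' (genWeight_self_le t G)
  exact ne_top_of_le_ne_top (by simp [ENNReal.sum_eq_top]) h1

/-- Every finite weight is bounded by the universal one, by rescaling. If `W G = 0`, then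
`(W G)⁻¹ * W` has value `0` at `G`, and finiteness of `genWeight` forces `W = 0`. -/
lemma IsWeight.le_genWeight {t : ℝ} {W : D → ℝ≥0∞} (hW : IsWeight t W) {G : D}
    (hG : IsSplitGenerator D G) (hfin : W G ≠ ⊤) (X : D) :
    W X ≤ W G * genWeight t G X := by
  have h : (W G)⁻¹ * W X ≤ genWeight t G X :=
    le_iSup (fun W : {W : D → ℝ≥0∞ // IsWeight t W ∧ W G ≤ 1} => W.1 X)
      ⟨_, hW.const_mul (W G)⁻¹, ENNReal.inv_mul_le_one _⟩
  rcases eq_or_ne (W G) 0 with h0 | h0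
  · rw [h0, ENNReal.inv_zero] at h
    rw [h0, zero_mul, nonpos_iff_eq_zero]
    by_contra hX
    rw [ENNReal.top_mul hX, top_le_iff] at h
    exact genWeight_ne_top t hG X h
  · rwa [ENNReal.inv_mul_le_iff h0 hfin] at h

end Weights

end CatEnt

/-! ### Truncation and t-filtrations -/

namespace CatEnt

section TStr

set_option linter.unusedSectionVars false

variable {D : Type u} [Category.{v} D] [Preadditive D] [HasZeroObject D]
  [HasShift D ℤ] [∀ n : ℤ, (shiftFunctor D n).Additive] [Pretriangulated D]
  [HasFiniteBiproducts D]

lemma IsTri.rotate {X Y Z : D} (h : IsTri X Y Z) : IsTri Y Z (X⟦(1 : ℤ)⟧) := by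
  obtain ⟨f, g, δ, hT⟩ := h
  exact ⟨_, _, _, rot_of_distTriang _ hT⟩

lemma IsTri.invRotate {X Y Z : D} (h : IsTri X Y Z) : IsTri (Z⟦(-1 : ℤ)⟧) X Y := by
  obtain ⟨f, g, δ, hT⟩ := h
  exact ⟨_, _, _, inv_rot_of_distTriang _ hT⟩

lemma IsTri.shift {X Y Z : D} (h : IsTri X Y Z) (n : ℤ) : IsTri (X⟦n⟧) (Y⟦n⟧) (Z⟦n⟧) := by
  obtain ⟨f, g, δ, hT⟩ := h
  exact ⟨_, _, _, Triangle.shift_distinguished _ hT n⟩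

lemma isZero_of_hom_self {X : D} (h : ∀ f : X ⟶ X, f = 0) : IsZero X :=
  (IsZero.iff_id_eq_zero X).2 (h _)

/-- The composite of two shifts, as a single shift. -/
noncomputable def shiftIsoAdd (X : D) (a b c : ℤ) (h : a + b = c) : (X⟦a⟧)⟦b⟧ ≅ X⟦c⟧ :=
  ((shiftFunctorAdd' D a b c h).app X).symm

/-- The composite of two opposite shifts is the identity. -/
noncomputable def shiftIsoZero (X : D) (a b : ℤ) (h : a + b = 0) : (X⟦a⟧)⟦b⟧ ≅ X :=
  (shiftFunctorCompIsoId D a b h).app X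

variable {le ge : Set D} (ht : IsTStructureIn D Set.univ le ge)

include ht

lemma le_shift_nat {X : D} (hX : X ∈ le) (n : ℕ) : X⟦(n : ℤ)⟧ ∈ le := by
  induction n with
  | zero => exact ht.le_iso ((shiftFunctorZero D ℤ).app X).symm hX
  | succ n ih => exact ht.le_iso (shiftIsoAdd X n 1 _ (by simp)) (ht.shift_le _ ih)

lemma ge_shift_nat {X : D} (hX : X ∈ ge) (n : ℕ) : X⟦(-n : ℤ)⟧ ∈ ge := by
  induction n with
  | zero => exact ht.ge_iso ((shiftFunctorZero' D _ (by simp)).app X).symm hX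
  | succ n ih =>
    exact ht.ge_iso (shiftIsoAdd X (-n) (-1) _ (by push_cast; ring)) (ht.shift_ge _ ih)

/-- The aisle `le` is the left orthogonal of the objects `Y` with `Y⟦1⟧ ∈ ge`. -/
lemma mem_le_of_orthogonal {X : D}
    (h : ∀ Y : D, Y⟦(1 : ℤ)⟧ ∈ ge → ∀ f : X ⟶ Y, f = 0) : X ∈ le := by
  obtain ⟨A, B, hA, hB, f, g, δ, hT⟩ := ht.exists_triangle X trivial
  have hB0 : IsZero B := by
    refine isZero_of_hom_self fun φ => ?_
    obtain ⟨ψ, hψ⟩ := Triangle.yoneda_exact₃ _ hT φ (h B hB (g ≫ φ))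
    have hψ0 : ψ = 0 := ht.hom_zero _ (ht.shift_le _ hA) B hB ψ
    rw [hψ, hψ0]
    exact comp_zero
  have : IsIso f := (Triangle.isZero₃_iff_isIso₁ _ hT).1 hB0
  exact ht.le_iso (asIso f) hA

/-- The objects `Y` with `Y⟦1⟧ ∈ ge` form the right orthogonal of `le`. -/
lemma mem_ge_of_orthogonal {Y : D}
    (h : ∀ X ∈ le, ∀ f : X ⟶ Y, f = 0) : Y⟦(1 : ℤ)⟧ ∈ ge := by
  obtain ⟨A, B, hA, hB, f, g, δ, hT⟩ := ht.exists_triangle Y trivial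
  have hA0 : IsZero A := by
    refine isZero_of_hom_self fun φ => ?_
    obtain ⟨ψ, hψ⟩ := Triangle.coyoneda_exact₂ _ (inv_rot_of_distTriang _ hT) φ (h A hA (φ ≫ f))
    have hB' : ((B⟦(-1 : ℤ)⟧)⟦(1 : ℤ)⟧) ∈ ge :=
      ht.ge_iso ((shiftIsoAdd B 1 (-1) 0 (by simp)) ≪≫
        (shiftIsoAdd B (-1) 1 0 (by simp)).symm) (ht.shift_ge _ hB)
    have hψ0 : ψ = 0 := ht.hom_zero A hA (B⟦(-1 : ℤ)⟧) hB' ψ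
    rw [hψ, hψ0]
    exact zero_comp
  have : IsIso g := (Triangle.isZero₁_iff_isIso₂ _ hT).1 hA0
  exact ht.ge_iso ((shiftFunctor D (1 : ℤ)).mapIso (asIso g).symm) hB

lemma le_ext {X Y Z : D} (h : IsTri X Y Z) (hX : X ∈ le) (hZ : Z ∈ le) : Y ∈ le := by
  refine mem_le_of_orthogonal ht fun B hB φ => ?_
  obtain ⟨f, g, δ, hT⟩ := h
  obtain ⟨ψ, hψ⟩ := Triangle.yoneda_exact₂ _ hT φ (ht.hom_zero X hX B hB _)
  have hψ0 : ψ = 0 := ht.hom_zero Z hZ B hB ψ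
  rw [hψ, hψ0]
  exact comp_zero

lemma ge_ext {X Y Z : D} (h : IsTri X Y Z) (hX : X ∈ ge) (hZ : Z ∈ ge) : Y ∈ ge := by
  have key : ∀ W : D, W ∈ ge → ((W⟦(-1 : ℤ)⟧)⟦(1 : ℤ)⟧) ∈ ge := fun W hW =>
    ht.ge_iso (shiftIsoZero W (-1) 1 (by simp)).symm hW
  refine ht.ge_iso (shiftIsoZero Y (-1) 1 (by simp)) (mem_ge_of_orthogonal ht fun A hA φ => ?_)
  obtain ⟨f, g, δ, hT⟩ := h.shift (-1)
  obtain ⟨ψ, hψ⟩ := Triangle.coyoneda_exact₂ _ hT φ (ht.hom_zero A hA _ (key Z hZ) _)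
  have hψ0 : ψ = 0 := ht.hom_zero A hA _ (key X hX) ψ
  rw [hψ, hψ0]
  exact zero_comp

/-- Existence of t-filtrations: an object in the interval between `le⟦-a⟧` and `ge⟦n-1-a⟧`
is filtered by splitting off its factor of lowest shift `-a` with a truncation triangle and
filtering the remaining truncation in the same way. -/
lemma exists_tFiltration (n : ℕ) : ∀ (A : D) (a : ℤ), A⟦a⟧ ∈ le → A⟦a - n + 1⟧ ∈ ge →
    ∃ (m : ℕ) (k : Fin m → ℤ) (X : Fin m → D), StrictAnti k ∧ (∀ i, -a ≤ k i) ∧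
      (∀ i, X i ∈ heart D le ge) ∧ HasFiltrationIn D Set.univ A (fun i => (X i)⟦k i⟧) := by
  induction n with
  | zero =>
    intro A a h1 h2
    refine ⟨0, Fin.elim0, Fin.elim0, fun i => i.elim0, fun i => i.elim0, fun i => i.elim0,
      filtration_zero.2 ?_⟩
    have h0 : IsZero (A⟦a⟧) := isZero_of_hom_self
      (ht.hom_zero _ h1 _ (ht.ge_iso (shiftIsoAdd A a 1 _ (by simp)).symm h2))
    exact ((shiftFunctor D (-a)).map_isZero h0).of_iso (shiftIsoZero A a (-a) (by simp)).symm
  | succ n ih =>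
    intro A a h1 h2
    obtain ⟨P, Q, hP, hQ, hT⟩ := ht.exists_triangle (A⟦a - 1⟧) trivial
    have hT : IsTri P (A⟦a - 1⟧) Q := hT
    have hPge : P⟦1 - (n : ℤ)⟧ ∈ ge := by
      refine ge_ext ht (hT.invRotate.shift (1 - n)) ?_ ?_
      · exact ht.ge_iso ((shiftIsoAdd Q 1 (-(n + 1 : ℕ)) (-n) (by push_cast; ring)) ≪≫
          (shiftIsoAdd Q (-1) (1 - n) (-n) (by ring)).symm) (ge_shift_nat ht hQ (n + 1))
      · exact ht.ge_iso (shiftIsoAdd A (a - 1) (1 - n) _ (by push_cast; ring)).symm h2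
    have hQle : Q⟦(1 : ℤ)⟧ ∈ le := by
      refine le_ext ht (hT.rotate.shift 1) ?_ (ht.shift_le _ (ht.shift_le _ hP))
      exact ht.le_iso (shiftIsoAdd A (a - 1) 1 _ (by ring)).symm h1
    obtain ⟨m, k, X, hk, hka, hX, hfil⟩ := ih (P⟦1 - a⟧) (a - 1)
      (ht.le_iso (shiftIsoZero P (1 - a) (a - 1) (by ring)).symm hP)
      (ht.ge_iso (shiftIsoAdd P (1 - a) (a - 1 - n + 1) _ (by ring)).symm hPge)
    have hfil' := filtration_snoc hfil ((hT.shift (1 - a)).of_iso (Iso.refl _)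
      (shiftIsoZero A (a - 1) (1 - a) (by ring))
      (shiftIsoAdd Q 1 (-a) (1 - a) (by ring)).symm)
    refine ⟨m + 1, Fin.snoc k (-a), Fin.snoc X (Q⟦(1 : ℤ)⟧), ?_, ?_, ?_, ?_⟩
    · intro i j hij
      induction j using Fin.lastCases with
      | last =>
        induction i using Fin.lastCases with
        | last => exact absurd hij (lt_irrefl _)
        | cast i => simp only [Fin.snoc_last, Fin.snoc_castSucc]; have := hka i; lia
      | cast j =>
        induction i using Fin.lastCases with
        | last => exact absurd hij (not_lt.2 (Fin.le_last _))
        | cast i => simp only [Fin.snoc_castSucc]; exact hk (by simpa using hij)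
    · intro i
      induction i using Fin.lastCases with
      | last => simp
      | cast i => simp only [Fin.snoc_castSucc]; have := hka i; lia
    · intro i
      induction i using Fin.lastCases with
      | last => simp only [Fin.snoc_last]; exact ⟨hQle, hQ⟩
      | cast i => simp only [Fin.snoc_castSucc]; exact hX i
    · convert hfil' using 1
      funext i
      induction i using Fin.lastCases with
      | last => simp only [Fin.snoc_last]
      | cast i => simp only [Fin.snoc_castSucc]

lemma exists_tFiltration_of_bounded (hbd : IsBoundedIn D Set.univ le ge) (E : D) :
    ∃ (m : ℕ) (k : Fin m → ℤ) (X : Fin m → D), StrictAnti k ∧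
      (∀ i, X i ∈ heart D le ge) ∧ HasFiltrationIn D Set.univ E (fun i => (X i)⟦k i⟧) := by
  obtain ⟨⟨a, ha⟩, ⟨b, hb⟩⟩ := hbd E trivial
  have h2 : E⟦a - ((a - b).toNat + 1 : ℕ) + 1⟧ ∈ ge :=
    ht.ge_iso (shiftIsoAdd E b (-((b - a).toNat : ℤ)) _ (by push_cast; lia))
      (ge_shift_nat ht hb _)
  obtain ⟨m, k, X, h1, -, h3, h4⟩ := exists_tFiltration ht _ E a ha h2
  exact ⟨m, k, X, h1, h3, h4⟩

end TStr

end CatEnt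

/-! ### Growth rates of sequences and Fekete's lemma -/

namespace CatEnt

section Ent

lemma entSeq_mono {f g : ℕ → ℝ≥0∞} (h : ∀ N, f N ≤ g N) (N : ℕ) : entSeq f N ≤ entSeq g N := by
  unfold entSeq
  exact mul_le_mul_of_nonneg_left (ENNReal.log_monotone (h N))
    (EReal.coe_nonneg.2 (by positivity))

lemma entSeq_const_mul {c : ℝ} (hc : 0 < c) (f : ℕ → ℝ≥0∞) (N : ℕ) :
    entSeq (fun N => ENNReal.ofReal c * f N) N
      = (((N : ℝ)⁻¹ * Real.log c : ℝ) : EReal) + entSeq f N := by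
  unfold entSeq
  rw [ENNReal.log_mul_add, EReal.left_distrib_of_nonneg_of_ne_top
    (EReal.coe_nonneg.2 (by positivity)) (EReal.coe_ne_top _), ENNReal.log_ofReal_of_pos hc,
    EReal.coe_mul]

lemma exists_ofReal {M : ℝ≥0∞} (hM : M ≠ ⊤) : ∃ c : ℝ, 0 < c ∧ M ≤ ENNReal.ofReal c :=
  ⟨M.toReal + 1, by positivity, by
    rw [← ENNReal.ofReal_toReal hM]; exact ENNReal.ofReal_le_ofReal (by simp)⟩

lemma tendsto_inv_mul (c : ℝ) :
    Tendsto (fun N : ℕ => (((N : ℝ)⁻¹ * Real.log c : ℝ) : EReal)) atTop (nhds 0) := by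
  have h : Tendsto (fun N : ℕ => (N : ℝ)⁻¹ * Real.log c) atTop (nhds (0 * Real.log c)) :=
    tendsto_inv_atTop_nhds_zero_nat.mul_const _
  rw [zero_mul] at h
  exact (continuous_coe_real_ereal.tendsto 0).comp h

lemma limsup_entSeq_le {f g : ℕ → ℝ≥0∞} {M : ℝ≥0∞} (hM : M ≠ ⊤) (h : ∀ N, f N ≤ M * g N) :
    limsup (entSeq f) atTop ≤ limsup (entSeq g) atTop := by
  obtain ⟨c, hc, hMc⟩ := exists_ofReal hM
  have h0 := (tendsto_inv_mul c).limsup_eq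
  calc limsup (entSeq f) atTop
      ≤ limsup ((fun N : ℕ => (((N : ℝ)⁻¹ * Real.log c : ℝ) : EReal)) + entSeq g) atTop := by
        refine limsup_le_limsup (Eventually.of_forall fun N => ?_)
        refine (entSeq_mono (g := fun N => ENNReal.ofReal c * g N)
          (fun N => (h N).trans (by gcongr)) N).trans ?_
        exact (entSeq_const_mul hc g N).le
    _ ≤ limsup (fun N : ℕ => (((N : ℝ)⁻¹ * Real.log c : ℝ) : EReal)) atTop
          + limsup (entSeq g) atTop :=
        EReal.limsup_add_le (by rw [h0]; simp) (by rw [h0]; simp)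
    _ = _ := by rw [h0, zero_add]

lemma liminf_entSeq_le {f g : ℕ → ℝ≥0∞} {M : ℝ≥0∞} (hM : M ≠ ⊤) (h : ∀ N, f N ≤ M * g N) :
    liminf (entSeq f) atTop ≤ liminf (entSeq g) atTop := by
  obtain ⟨c, hc, hMc⟩ := exists_ofReal hM
  have h0 := (tendsto_inv_mul c).limsup_eq
  calc liminf (entSeq f) atTop
      ≤ liminf ((fun N : ℕ => (((N : ℝ)⁻¹ * Real.log c : ℝ) : EReal)) + entSeq g) atTop := by
        refine liminf_le_liminf (Eventually.of_forall fun N => ?_)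
        refine (entSeq_mono (g := fun N => ENNReal.ofReal c * g N)
          (fun N => (h N).trans (by gcongr)) N).trans ?_
        exact (entSeq_const_mul hc g N).le
    _ ≤ limsup (fun N : ℕ => (((N : ℝ)⁻¹ * Real.log c : ℝ) : EReal)) atTop
          + liminf (entSeq g) atTop :=
        EReal.liminf_add_le (by rw [h0]; simp) (by rw [h0]; simp)
    _ = _ := by rw [h0, zero_add]

/-- Fekete's lemma for the growth rate of a submultiplicative sequence in `[0, ∞)`, with values
in the extended reals: the limit `-∞` is allowed, as are sequences with zero terms. -/
lemma fekete {a : ℕ → ℝ≥0∞} (hfin : ∀ N, a N ≠ ⊤) (hmul : ∀ N M, a (N + M) ≤ a N * a M) :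
    limsup (entSeq a) atTop ≤ liminf (entSeq a) atTop := by
  by_cases h0 : ∃ N, a N = 0
  · obtain ⟨N, hN⟩ := h0
    have : limsup (entSeq a) atTop ≤ ⊥ := by
      refine limsup_le_of_le (h := ?_)
      filter_upwards [eventually_ge_atTop N, eventually_gt_atTop 0] with M hM hM0
      obtain ⟨k, rfl⟩ := Nat.exists_eq_add_of_le hM
      have : a (N + k) = 0 := by simpa [hN] using hmul N k
      rw [entSeq, this, ENNReal.log_zero, EReal.coe_mul_bot_of_pos]
      positivity
    exact this.trans bot_le
  push Not at h0
  have hpos : ∀ N, 0 < (a N).toReal := fun N => ENNReal.toReal_pos (h0 N) (hfin N)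
  set v : ℕ → ℝ := fun N => Real.log (a N).toReal with hv
  have hsub : Subadditive v := by
    intro N M
    rw [hv]
    dsimp only
    rw [← Real.log_mul (hpos N).ne' (hpos M).ne', ← ENNReal.toReal_mul]
    exact Real.log_le_log (hpos _)
      (ENNReal.toReal_mono (ENNReal.mul_ne_top (hfin N) (hfin M)) (hmul N M))
  have hent : ∀ N, entSeq a N = ((v N / N : ℝ) : EReal) := by
    intro N
    rw [entSeq, ENNReal.log_pos_real (h0 N) (hfin N), ← EReal.coe_mul, div_eq_inv_mul]
  refine le_liminf_of_le (h := ?_)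
  filter_upwards [eventually_gt_atTop 0] with n hn
  rw [hent n]
  refine EReal.le_of_forall_lt_iff_le.1 fun L hL => ?_
  refine limsup_le_of_le (h := ?_)
  filter_upwards [hsub.eventually_div_lt_of_div_lt hn.ne' (EReal.coe_lt_coe_iff.1 hL)] with p hp
  rw [hent p]
  exact (EReal.coe_lt_coe_iff.2 hp).le

end Ent

/-! ### Growth rates of weights -/

section Growth

set_option linter.unusedSectionVars false

variable {D : Type u} [Category.{v} D] [Preadditive D] [HasZeroObject D]
  [HasShift D ℤ] [∀ n : ℤ, (shiftFunctor D n).Additive] [Pretriangulated D]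
  [HasFiniteBiproducts D]

/-- Any finite weight grows along the orbits of `Φ` at most as fast as `ĥ_t`. -/
lemma IsWeight.limsup_le_tEntropy {t : ℝ} {W : D → ℝ≥0∞} (hW : IsWeight t W)
    (hfin : ∀ X, W X ≠ ⊤) {H : Set D} (hH : FiniteHeart D H) (Φ : D ⥤ D) (E : D) :
    limsup (entSeq fun N => W ((iter Φ N).obj E)) atTop ≤ tEntropyIn D Set.univ H Φ t := by
  obtain ⟨M, hM, h⟩ := hW.le_tComplexity hfin hH
  exact (limsup_entSeq_le hM fun N => h _).trans
    (le_iSup (fun E : {X : D // X ∈ Set.univ} => limsup (entSeq fun N =>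
      tComplexity D H t ((iter Φ N).obj E.1)) atTop) ⟨E, trivial⟩)

lemma iter_add_obj (Φ : D ⥤ D) (N M : ℕ) (X : D) :
    (iter Φ (N + M)).obj X = (iter Φ M).obj ((iter Φ N).obj X) := by
  induction M with
  | zero => rfl
  | succ M ih => exact congrArg Φ.obj ih

/-- If a finite weight dominates `δ̂_t`, then its growth rate on a split-generator exists
as a limit and equals `ĥ_t`. -/
lemma IsWeight.exists_tendsto {t : ℝ} {W : D → ℝ≥0∞} (hW : IsWeight t W)
    (hfin : ∀ X, W X ≠ ⊤) {H : Set D} (hH : FiniteHeart D H)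
    (hle : ∀ X, tComplexity D H t X ≤ W X) (Φ : D ⥤ D) [Φ.CommShift ℤ] [Φ.IsTriangulated]
    {G : D} (hG : IsSplitGenerator D G) :
    ∃ L : EReal, Tendsto (entSeq fun N => W ((iter Φ N).obj G)) atTop (nhds L) ∧
      tEntropyIn D Set.univ H Φ t = L := by
  have hg := genWeight_isWeight t G
  have hgfin := genWeight_ne_top t hG
  set a : ℕ → ℝ≥0∞ := fun N => genWeight t G ((iter Φ N).obj G) with ha
  -- Submultiplicativity: `genWeight t G ∘ Φ^M` is a weight of value `a M` at `G`.
  have hmul : ∀ N M, a (N + M) ≤ a N * a M := by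
    intro N M
    have := (hg.comp_iter Φ M).le_genWeight hG (hgfin _) ((iter Φ N).obj G)
    rw [mul_comm]
    simpa only [ha, iter_add_obj] using this
  have hfek := fekete (a := a) (fun N => hgfin _) hmul
  obtain ⟨M, hM, hMle⟩ := hg.le_tComplexity hgfin hH
  have h1 : ∀ N, a N ≤ M * W ((iter Φ N).obj G) := fun N =>
    (hMle _).trans (by gcongr; exact hle _)
  have hinf : liminf (entSeq a) atTop ≤
      liminf (entSeq fun N => W ((iter Φ N).obj G)) atTop := liminf_entSeq_le hM h1
  have hinf' : limsup (entSeq a) atTop ≤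
      limsup (entSeq fun N => W ((iter Φ N).obj G)) atTop := limsup_entSeq_le hM h1
  have hsup : limsup (entSeq fun N => W ((iter Φ N).obj G)) atTop ≤ limsup (entSeq a) atTop :=
    limsup_entSeq_le (hfin G) fun N => hW.le_genWeight hG (hfin G) _
  refine ⟨limsup (entSeq a) atTop, tendsto_of_le_liminf_of_limsup_le (hfek.trans hinf) hsup, ?_⟩
  refine le_antisymm (iSup_le fun E => ?_)
    (hinf'.trans (hW.limsup_le_tEntropy hfin hH Φ G))
  refine limsup_entSeq_le (M := W G * genWeight t G E.1)
    (ENNReal.mul_ne_top (hfin G) (hgfin _)) fun N => ?_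
  refine (hle _).trans ((hW.le_genWeight hG (hfin G) _).trans ?_)
  rw [mul_assoc]
  gcongr
  have := (hg.comp_iter Φ N).le_genWeight hG (hgfin _) E.1
  rwa [mul_comm] at this

end Growth

/-! ### Dimension families -/

section Dim

set_option linter.unusedSectionVars false

variable {D : Type u} [Category.{v} D] [Preadditive D] [HasZeroObject D]
  [HasShift D ℤ] [∀ n : ℤ, (shiftFunctor D n).Additive] [Pretriangulated D]
  [HasFiniteBiproducts D]

/-- The formal properties of the family of dimensions `k ↦ dim H^{-k}(Γ(X))` (for covariant `Γ`),
respectively `k ↦ dim H^k(Γ(X))` (for contravariant `Γ`). With these conventions the shift acts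
in the same way, and `exact` is the additivity of dimensions in degree `k` when the neighbouring
terms of the long exact sequence vanish, in both cases. -/
structure IsDimFamily (d : ℤ → D → ℕ) : Prop where
  retract : ∀ (k : ℤ) {X Y : D}, Retract X Y → d k X ≤ d k Y
  zero : ∀ (k : ℤ) {X : D}, IsZero X → d k X = 0
  tri : ∀ (k : ℤ) {X Y Z : D}, IsTri X Y Z → d k Y ≤ d k X + d k Z
  exact : ∀ (k : ℤ) {X Y Z : D}, IsTri X Y Z → d (k - 1) X = 0 → d (k + 1) Z = 0 →
    d k X + d k Z ≤ d k Y
  shift : ∀ (k n : ℤ) (X : D), d k (X⟦n⟧) = d (k - n) X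
  finite : ∀ X : D, {k | d k X ≠ 0}.Finite

/-- The generating sum `∑_k d_k(X) e^{kt}`. -/
noncomputable def dimWeight (d : ℤ → D → ℕ) (t : ℝ) (X : D) : ℝ≥0∞ :=
  ∑' k : ℤ, (d k X : ℝ≥0∞) * ENNReal.ofReal (Real.exp ((k : ℝ) * t))

namespace IsDimFamily

variable {d : ℤ → D → ℕ} (hd : IsDimFamily d)

include hd

lemma dimWeight_isWeight (t : ℝ) : IsWeight t (dimWeight d t) where
  retract h := ENNReal.tsum_le_tsum fun k => by gcongr; exact hd.retract k h
  zero h := by simp [dimWeight, hd.zero _ h]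
  tri hT := by
    rw [dimWeight, dimWeight, dimWeight, ← ENNReal.tsum_add]
    refine ENNReal.tsum_le_tsum fun k => ?_
    rw [← add_mul]
    gcongr
    exact_mod_cast hd.tri k hT
  shift X n := by
    rw [dimWeight, dimWeight, ← ENNReal.tsum_mul_left, ← (Equiv.addRight n).tsum_eq]
    refine ENNReal.tsum_le_tsum fun k => le_of_eq ?_
    rw [hd.shift, Equiv.coe_addRight, add_sub_cancel_right]
    push_cast
    rw [add_mul, Real.exp_add, ENNReal.ofReal_mul (by positivity)]
    ring

lemma dimWeight_ne_top (t : ℝ) (X : D) : dimWeight d t X ≠ ⊤ := by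
  rw [dimWeight, tsum_eq_sum (s := (hd.finite X).toFinset)]
  · simp [ENNReal.sum_eq_top, ENNReal.mul_eq_top]
  · intro k hk
    have : d k X = 0 := by simpa using hk
    simp [this]

lemma eq_add {k : ℤ} {X Y Z : D} (hT : IsTri X Y Z) (h1 : d (k - 1) X = 0)
    (h2 : d (k + 1) Z = 0) : d k Y = d k X + d k Z :=
  le_antisymm (hd.tri k hT) (hd.exact k hT h1 h2)

/-- No condition on `X` is needed here: rotating the triangle bounds `d k X` by `d k Y` and
`d k (Z⟦-1⟧) = d (k + 1) Z`. -/
lemma eq_of_zero {k : ℤ} {X Y Z : D} (hT : IsTri X Y Z) (h1 : d k Z = 0)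
    (h2 : d (k + 1) Z = 0) : d k Y = d k X := by
  refine le_antisymm (by simpa [h1] using hd.tri k hT) ?_
  have := hd.tri k hT.invRotate
  rwa [hd.shift, sub_neg_eq_add, h2, zero_add] at this

/-- On the heart, `d` is concentrated in degree `0` and `d 0` is the length. -/
lemma heart_eq {H : Set D} (hs : ∀ S, SimpleIn D H S → ∀ k, d k S = if k = 0 then 1 else 0)
    {n : ℕ} : ∀ {X : D} {S : Fin n → D}, (∀ i, SimpleIn D H (S i)) →
      HasFiltrationIn D Set.univ X S → ∀ k, d k X = if k = 0 then n else 0 := by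
  induction n with
  | zero => intro X S _ h k; simp [hd.zero k (filtration_zero.1 h)]
  | succ n ih =>
    intro X S hS h k
    obtain ⟨X', hX', hT⟩ := filtration_succ h
    have hX := ih (fun i => hS _) hX'
    have hZ := hs _ (hS (Fin.last n))
    by_cases hk : k = 0
    · subst hk
      rw [hd.eq_add hT (by simp [hX]) (by simp [hZ]), hX, hZ]
      simp
    · have h1 := hd.tri k hT
      rw [hX, hZ] at h1
      simpa [hk] using h1

/-- Along a t-filtration the dimensions add up, since the pieces sit in distinct degrees,
decreasing from the first factor to the last. -/
lemma tFiltration_eq {m : ℕ} : ∀ {E : D} {k : Fin m → ℤ} {X : Fin m → D} {lam : Fin m → ℕ},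
    StrictAnti k → (∀ i j, d j (X i) = if j = 0 then lam i else 0) →
    HasFiltrationIn D Set.univ E (fun i => (X i)⟦k i⟧) →
    ∀ j, d j E = ∑ i, if j = k i then lam i else 0 := by
  induction m with
  | zero => intro E k X lam _ _ h j; simp [hd.zero j (filtration_zero.1 h)]
  | succ m ih =>
    intro E k X lam hk hX h j
    obtain ⟨E', hE', hT⟩ := filtration_succ h
    have hk' : ∀ i : Fin m, k (Fin.last m) < k i.castSucc := fun i => hk (Fin.castSucc_lt_last i)
    have hE := ih (k := fun i => k i.castSucc) (lam := fun i => lam i.castSucc)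
      (fun i j hij => hk (by simpa using hij)) (fun i => hX _) hE'
    have hE0 : ∀ j, j ≤ k (Fin.last m) → d j E' = 0 := by
      intro j hj
      rw [hE]
      refine Finset.sum_eq_zero fun i _ => if_neg ?_
      have := hk' i
      lia
    have hZ : ∀ j, d j ((X (Fin.last m))⟦k (Fin.last m)⟧)
        = if j = k (Fin.last m) then lam (Fin.last m) else 0 := by
      intro j
      rw [hd.shift, hX]
      simp only [sub_eq_zero]
    rw [Fin.sum_univ_castSucc, ← hE, ← hZ]
    rcases lt_trichotomy j (k (Fin.last m)) with hj | hj | hj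
    · have h0 := hd.tri j hT
      have hE0j := hE0 j hj.le
      have hZ0 : d j ((X (Fin.last m))⟦k (Fin.last m)⟧) = 0 := by rw [hZ, if_neg hj.ne]
      lia
    · exact hd.eq_add hT (hE0 _ (by lia)) (by rw [hZ, if_neg (by lia)])
    · rw [hd.eq_of_zero hT (by rw [hZ, if_neg (by lia)]) (by rw [hZ, if_neg (by lia)]), hZ,
        if_neg (by lia), add_zero]

/-- If `d` is the expected function on simple objects, `∑_k d_k(E) e^{kt}` is the value
`∑ λ(E_i) e^{k_i t}` of any t-filtration of `E`, hence bounds `δ̂_t(E)`. -/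
lemma tComplexity_le {le ge : Set D} (ht : IsTStructureIn D Set.univ le ge)
    (hbd : IsBoundedIn D Set.univ le ge) (hfin : FiniteHeart D (heart D le ge))
    (hs : ∀ S, SimpleIn D (heart D le ge) S → ∀ k, d k S = if k = 0 then 1 else 0)
    (t : ℝ) (E : D) : tComplexity D (heart D le ge) t E ≤ dimWeight d t E := by
  obtain ⟨m, k, X, hk, hX, hfil⟩ := exists_tFiltration_of_bounded ht hbd E
  choose lam hlam using fun i => hfin.1 (X i) (hX i)
  refine sInf_le ⟨m, k, X, lam, hk, hX, hlam, hfil, ?_⟩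
  have hdX : ∀ i j, d j (X i) = if j = 0 then lam i else 0 := fun i => by
    obtain ⟨S, hS, hSf⟩ := hlam i
    exact hd.heart_eq hs hS hSf
  rw [ENNReal.ofReal_sum_of_nonneg (fun i _ => by positivity), dimWeight]
  simp_rw [hd.tFiltration_eq hk hdX hfil, Nat.cast_sum, Finset.sum_mul]
  rw [Summable.tsum_finsetSum (fun _ _ => ENNReal.summable)]
  refine Finset.sum_congr rfl fun i _ => ?_
  rw [tsum_eq_single (k i) (fun j hj => by simp [hj])]
  rw [if_pos rfl, ENNReal.ofReal_mul (by positivity), ENNReal.ofReal_natCast]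

end IsDimFamily

end Dim

end CatEnt

/-! ### Cohomology in `D^b(K)` -/

namespace CatEnt

section Db

set_option linter.unusedSectionVars false

variable {K : Type} [Field K]

/-- The `n`-th cohomology of an object of `D^b(K)`. -/
noncomputable abbrev cohom (K : Type) [Field K] (n : ℤ) : Db K ⥤ ModuleCat.{0} K :=
  HomotopyCategory.homologyFunctor (ModuleCat.{0} K) (ComplexShape.up ℤ) n

lemma finrank_le_of_exact {A B C : ModuleCat.{0} K} [Module.Finite K A] [Module.Finite K B]
    [Module.Finite K C] {f : A ⟶ B} {g : B ⟶ C} {w : f ≫ g = 0}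
    (h : (ShortComplex.mk f g w).Exact) :
    Module.finrank K B ≤ Module.finrank K A + Module.finrank K C := by
  have h1 : LinearMap.range f.hom = LinearMap.ker g.hom := h.moduleCat_range_eq_ker
  have h2 := LinearMap.finrank_range_add_finrank_ker g.hom
  have h3 := LinearMap.finrank_range_le f.hom
  have h4 := Submodule.finrank_le (LinearMap.range g.hom)
  rw [← h1] at h2
  lia

lemma finrank_eq_of_exact {A B C : ModuleCat.{0} K} [Module.Finite K A] [Module.Finite K B]
    [Module.Finite K C] {f : A ⟶ B} {g : B ⟶ C} {w : f ≫ g = 0}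
    (h : (ShortComplex.mk f g w).Exact) [Mono f] [Epi g] :
    Module.finrank K B = Module.finrank K A + Module.finrank K C := by
  have h1 : LinearMap.range f.hom = LinearMap.ker g.hom := h.moduleCat_range_eq_ker
  have h2 := LinearMap.finrank_range_add_finrank_ker g.hom
  have h3 := LinearMap.finrank_range_of_inj ((ModuleCat.mono_iff_injective f).1 inferInstance)
  have h4 : LinearMap.range g.hom = ⊤ :=
    LinearMap.range_eq_top.2 ((ModuleCat.epi_iff_surjective g).1 inferInstance)
  rw [← h1, h4, finrank_top] at h2
  lia

lemma cohomDim_iso {V W : Db K} (e : V ≅ W) (n : ℤ) : cohomDim K V n = cohomDim K W n :=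
  ((cohom K n).mapIso e).toLinearEquiv.finrank_eq

lemma cohomDim_retract {V W : Db K} (hW : MemDb K W) (r : Retract V W) (n : ℤ) :
    cohomDim K V n ≤ cohomDim K W n := by
  have := hW.2 n
  refine LinearMap.finrank_le_finrank_of_injective (f := ((r.map (cohom K n)).i).hom) ?_
  exact (ModuleCat.mono_iff_injective (r.map (cohom K n)).i).1 inferInstance

lemma isZero_cohom_iff {V : Db K} (hV : MemDb K V) (n : ℤ) :
    cohomDim K V n = 0 ↔ IsZero ((cohom K n).obj V) := by
  have := hV.2 n
  rw [cohomDim, Module.finrank_zero_iff]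
  exact ⟨fun _ => ModuleCat.isZero_of_subsingleton _, ModuleCat.subsingleton_of_isZero⟩

lemma cohomDim_shift (V : Db K) (a n m : ℤ) (h : a + n = m) :
    cohomDim K (V⟦a⟧) n = cohomDim K V m :=
  (((cohom K 0).shiftIso a n m h).app V).toLinearEquiv.finrank_eq

lemma cohomDim_tri {X Y Z : Db K} (hX : MemDb K X) (hY : MemDb K Y) (hZ : MemDb K Z)
    (hT : IsTri X Y Z) (n : ℤ) : cohomDim K Y n ≤ cohomDim K X n + cohomDim K Z n := by
  obtain ⟨f, g, δ, hT⟩ := hT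
  have := hX.2 n
  have := hY.2 n
  have := hZ.2 n
  exact finrank_le_of_exact ((cohom K 0).homologySequence_exact₂ _ hT n)

/-- The vanishing of `H^{n-1}(Z)` and `H^{n+1}(X)` turns the long exact sequence in degree `n` into
a short exact one. -/
lemma cohomDim_exact {X Y Z : Db K} (hX : MemDb K X) (hY : MemDb K Y) (hZ : MemDb K Z)
    (hT : IsTri X Y Z) (n : ℤ) (h1 : cohomDim K X (n + 1) = 0) (h2 : cohomDim K Z (n - 1) = 0) :
    cohomDim K X n + cohomDim K Z n ≤ cohomDim K Y n := by
  obtain ⟨f, g, δ, hT⟩ := hT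
  have : Module.Finite K (((cohom K 0).shift n).obj (Triangle.mk f g δ).obj₁) := hX.2 n
  have : Module.Finite K (((cohom K 0).shift n).obj (Triangle.mk f g δ).obj₂) := hY.2 n
  have : Module.Finite K (((cohom K 0).shift n).obj (Triangle.mk f g δ).obj₃) := hZ.2 n
  have i1 := ((cohom K 0).homologySequence_mono_shift_map_mor₁_iff _ hT (n - 1) n (by lia)).2
    (((isZero_cohom_iff hZ _).1 h2).eq_of_src _ _)
  have i2 := ((cohom K 0).homologySequence_epi_shift_map_mor₂_iff _ hT n (n + 1) rfl).2
    (((isZero_cohom_iff hX _).1 h1).eq_of_tgt _ _)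
  exact (finrank_eq_of_exact ((cohom K 0).homologySequence_exact₂ _ hT n)).ge

lemma cohomDim_unit (n : ℤ) : cohomDim K (unitDb K) n = if n = 0 then 1 else 0 := by
  have e := ((HomotopyCategory.homologyFunctorFactors (ModuleCat.{0} K)
    (ComplexShape.up ℤ) n).app ((HomologicalComplex.single (ModuleCat.{0} K)
      (ComplexShape.up ℤ) 0).obj (ModuleCat.of K K))).toLinearEquiv.finrank_eq
  refine Eq.trans e ?_
  split_ifs with hn
  · subst hn
    exact (HomologicalComplex.singleObjHomologySelfIso (ComplexShape.up ℤ) (0 : ℤ)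
      (ModuleCat.of K K)).toLinearEquiv.finrank_eq.trans (Module.finrank_self K)
  · have hz : IsZero (((HomologicalComplex.single (ModuleCat.{0} K)
      (ComplexShape.up ℤ) 0).obj (ModuleCat.of K K)).homology n) :=
      HomologicalComplex.isZero_single_obj_homology _ _ _ _ hn
    have : Subsingleton ((HomologicalComplex.homologyFunctor (ModuleCat.{0} K)
        (ComplexShape.up ℤ) n).obj ((HomologicalComplex.single (ModuleCat.{0} K)
          (ComplexShape.up ℤ) 0).obj (ModuleCat.of K K))) :=
      ModuleCat.subsingleton_of_isZero hz
    exact Module.finrank_zero_of_subsingleton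

lemma MemDb.finite {V : Db K} (hV : MemDb K V) : {n | cohomDim K V n ≠ 0}.Finite :=
  hV.1.subset fun n hn hz => hn ((isZero_cohom_iff hV n).2 hz)

lemma cohomDim_zero {V : Db K} (hV : IsZero V) (n : ℤ) : cohomDim K V n = 0 := by
  have := ModuleCat.subsingleton_of_isZero ((cohom K n).map_isZero hV)
  exact Module.finrank_zero_of_subsingleton

variable {D : Type u} [Category.{v} D] [Preadditive D]
    [HasZeroObject D] [HasShift D ℤ] [∀ n : ℤ, (shiftFunctor D n).Additive]
    [Pretriangulated D] [HasFiniteBiproducts D]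

lemma isDimFamily_covariant (Γ : D ⥤ Db K) [Γ.CommShift ℤ] [Γ.IsTriangulated]
    (hΓb : ∀ X : D, MemDb K (Γ.obj X)) :
    IsDimFamily (fun k X => cohomDim K (Γ.obj X) (-k)) where
  retract k _ Y r := cohomDim_retract (hΓb Y) (r.map Γ) _
  zero k X h := cohomDim_zero (Γ.map_isZero h) _
  tri k := fun ⟨_, _, _, hT⟩ => cohomDim_tri (hΓb _) (hΓb _) (hΓb _)
    ⟨_, _, _, Γ.map_distinguished _ hT⟩ _
  exact k := fun ⟨_, _, _, hT⟩ h1 h2 => cohomDim_exact (hΓb _) (hΓb _) (hΓb _)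
    ⟨_, _, _, Γ.map_distinguished _ hT⟩ _ (by rw [← h1]; congr 1; ring)
      (by rw [← h2]; congr 1; ring)
  shift k n X := (cohomDim_iso ((Γ.commShiftIso n).app X) _).trans
    (cohomDim_shift _ _ _ _ (by ring))
  finite X := (hΓb X).finite.preimage (neg_injective.injOn)

lemma IsTri.op {X Y Z : D} (h : IsTri X Y Z) :
    IsTri (Opposite.op Z) (Opposite.op Y) (Opposite.op X) := by
  obtain ⟨f, g, δ, hT⟩ := h
  exact ⟨_, _, _, op_distinguished _ hT⟩

lemma isDimFamily_contravariant (Γ : Dᵒᵖ ⥤ Db K) [Γ.CommShift ℤ] [Γ.IsTriangulated]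
    (hΓb : ∀ X : Dᵒᵖ, MemDb K (Γ.obj X)) :
    IsDimFamily (fun k (X : D) => cohomDim K (Γ.obj (Opposite.op X)) k) where
  retract k _ Y r := cohomDim_retract (hΓb _) (r.op.map Γ) _
  zero k X h := cohomDim_zero (Γ.map_isZero h.op) _
  tri k := fun {X Y Z} h => by
    obtain ⟨_, _, _, hT⟩ := h.op
    rw [add_comm]
    exact cohomDim_tri (hΓb _) (hΓb _) (hΓb _) ⟨_, _, _, Γ.map_distinguished _ hT⟩ _
  exact k := fun {X Y Z} h h1 h2 => by
    obtain ⟨_, _, _, hT⟩ := h.op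
    rw [add_comm]
    exact cohomDim_exact (hΓb _) (hΓb _) (hΓb _) ⟨_, _, _, Γ.map_distinguished _ hT⟩ _ h2 h1
  shift k n X := (cohomDim_iso (Γ.mapIso ((shiftFunctorOpIso D (-n) n (by simp)).app
      (Opposite.op X)).symm ≪≫ (Γ.commShiftIso (-n)).app (Opposite.op X)) _).trans
    (cohomDim_shift _ _ _ _ (by ring))
  finite X := (hΓb _).finite

/-- Replacing `k` by `-k` turns `∑ dim H^{-k} e^{-kt}` into `∑ dim H^k e^{kt}`. -/
lemma dimSumNeg_contravariant (Γ : Dᵒᵖ ⥤ Db K) (t : ℝ) (X : D) :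
    dimSumNeg K (Γ.obj (Opposite.op X)) (-t) =
      dimWeight (fun k (X : D) => cohomDim K (Γ.obj (Opposite.op X)) k) t X := by
  rw [dimSumNeg, dimWeight, ← (Equiv.neg ℤ).tsum_eq]
  simp

end Db

end CatEnt

/-- let `𝔞 = (le, ge)` be a bounded t-structure with finite heart `H`
on a `K`-linear idempotent complete triangulated category `D` with split-generator,
`Φ` an exact endofunctor with `Φ^N ≇ 0`, and `Γ : D ⥤ D^b(K)` (resp.
`Γ' : Dᵒᵖ ⥤ D^b(K)`) an exact functor. Then (i) `ĥ_t^𝔞(Φ)` dominates the limsup of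
`(1/N) log ∑_k dim H^{-k}(Γ(Φ^N E)) e^{kt}` for every `E`; and (ii) if `Γ(E) ≅ K`
for every simple `E ∈ H`, then for every split-generator `G` the limit exists and
equals `ĥ_t^𝔞(Φ)`. The analogous statements hold for `Γ'` with `e^{kt}` replaced
by `e^{-kt}`. -/
theorem tEntropy_dim_growth
    (K : Type) [Field K]
    (D : Type u) [Category.{v} D] [Preadditive D] [CategoryTheory.Linear K D]
    [HasZeroObject D] [HasShift D ℤ] [∀ n : ℤ, (shiftFunctor D n).Additive]
    [Pretriangulated D] [HasFiniteBiproducts D] [IsIdempotentComplete D]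
    (le ge : Set D)
    (ht : IsTStructureIn D Set.univ le ge)
    (hbd : IsBoundedIn D Set.univ le ge)
    (hfin : FiniteHeart D (heart D le ge))
    (Φ : D ⥤ D) [Φ.CommShift ℤ] [Φ.IsTriangulated]
    (hΦ : PowersNonzeroOn D Set.univ Φ)
    (hgen : ∃ G, IsSplitGenerator D G)
    (Γ : D ⥤ Db K) [Γ.CommShift ℤ] [Γ.IsTriangulated]
    (hΓb : ∀ X : D, MemDb K (Γ.obj X))
    (Γ' : Dᵒᵖ ⥤ Db K) [Γ'.CommShift ℤ] [Γ'.IsTriangulated]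
    (hΓ'b : ∀ X : Dᵒᵖ, MemDb K (Γ'.obj X))
    (t : ℝ) :
    (∀ E : D,
      Filter.limsup
        (entSeq (fun N => dimSumNeg K (Γ.obj ((iter Φ N).obj E)) t))
        Filter.atTop ≤ tEntropyIn D Set.univ (heart D le ge) Φ t) ∧
    ((∀ E : D, SimpleIn D (heart D le ge) E → Nonempty (Γ.obj E ≅ unitDb K)) →
      ∀ G : D, IsSplitGenerator D G →
        ∃ L : EReal,
          Filter.Tendsto
            (entSeq (fun N => dimSumNeg K (Γ.obj ((iter Φ N).obj G)) t))
            Filter.atTop (nhds L) ∧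
          tEntropyIn D Set.univ (heart D le ge) Φ t = L) ∧
    (∀ E : D,
      Filter.limsup
        (entSeq (fun N => dimSumNeg K (Γ'.obj (Opposite.op ((iter Φ N).obj E))) (-t)))
        Filter.atTop ≤ tEntropyIn D Set.univ (heart D le ge) Φ t) ∧
    ((∀ E : D, SimpleIn D (heart D le ge) E →
        Nonempty (Γ'.obj (Opposite.op E) ≅ unitDb K)) →
      ∀ G : D, IsSplitGenerator D G →
        ∃ L : EReal,
          Filter.Tendsto
            (entSeq (fun N => dimSumNeg K (Γ'.obj (Opposite.op ((iter Φ N).obj G))) (-t)))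
            Filter.atTop (nhds L) ∧
          tEntropyIn D Set.univ (heart D le ge) Φ t = L) := by
  have hd := isDimFamily_covariant Γ hΓb
  have hd' := isDimFamily_contravariant Γ' hΓ'b
  refine ⟨fun E => ?_, fun hs G hG => ?_, fun E => ?_, fun hs G hG => ?_⟩
  · exact (hd.dimWeight_isWeight t).limsup_le_tEntropy (hd.dimWeight_ne_top t) hfin Φ E
  · refine (hd.dimWeight_isWeight t).exists_tendsto (hd.dimWeight_ne_top t) hfin
      (hd.tComplexity_le ht hbd hfin (fun S hS k => ?_) t) Φ hG
    obtain ⟨e⟩ := hs S hS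
    rw [cohomDim_iso e, cohomDim_unit]
    simp only [neg_eq_zero]
  · simp only [dimSumNeg_contravariant]
    exact (hd'.dimWeight_isWeight t).limsup_le_tEntropy (hd'.dimWeight_ne_top t) hfin Φ E
  · simp only [dimSumNeg_contravariant]
    refine (hd'.dimWeight_isWeight t).exists_tendsto (hd'.dimWeight_ne_top t) hfin
      (hd'.tComplexity_le ht hbd hfin (fun S hS k => ?_) t) Φ hG
    obtain ⟨e⟩ := hs S hS
    rw [cohomDim_iso e, cohomDim_unit]
end
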